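/- arXiv:1902.07252 — 3 statements merged into one kernel-verified Lean document; each statement's English description precedes it below -/
import Mathlib

section
/- For every coordinate direction i ∈ {1, …, d}, every y ∈ T_L with y·e_i = 0, and all integers m, n with 0 < m ≤ n ≤ L/2, one has ⟨φ_o · φ_{y + n e_i}⟩_{L,N,β} + ⟨φ_o · φ_{n e_i}⟩_{L,N,β} ≤ ⟨φ_o · φ_{y + m e_i}⟩_{L,N,β} + ⟨φ_o · φ_{m e_i}⟩_{L,N,β}; that is, the function n ↦ ⟨φ_o · φ_{y + n e_i}⟩_{L,N,β} + ⟨φ_o · φ_{n e_i}⟩_{L,N,β} is non-increasing for integer n in (0, L/2]. -/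
open MeasureTheory Metric
open scoped RealInnerProductSpace BigOperators

/-- Vertices of the torus `(ℤ/Lℤ)^d`. -/
abbrev TorusPt (d L : ℕ) := Fin d → ZMod L

/-- Nearest-neighbour adjacency on the torus: `x` and `y` differ by `±1 (mod L)`
in exactly one coordinate. -/
def torusAdj {d L : ℕ} (x y : TorusPt d L) : Prop :=
  ∃ j : Fin d, y = Function.update x j (x j + 1) ∨ y = Function.update x j (x j - 1)

instance {d L : ℕ} (x y : TorusPt d L) : Decidable (torusAdj x y) := by
  unfold torusAdj; infer_instance

/-- The unit sphere `S^{N-1} ⊂ ℝ^N`. -/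
abbrev SpinSphere (N : ℕ) := sphere (0 : EuclideanSpace ℝ (Fin N)) 1

/-- A spin configuration on the torus. -/
abbrev SpinCfg (d L N : ℕ) := TorusPt d L → SpinSphere N

/-- The uniform probability measure on the unit sphere `S^{N-1}`. -/
noncomputable def sphereUniform (N : ℕ) : Measure (SpinSphere N) :=
  ((volume : Measure (EuclideanSpace ℝ (Fin N))).toSphere Set.univ)⁻¹ •
    (volume : Measure (EuclideanSpace ℝ (Fin N))).toSphere

/-- The product over vertices of the uniform probability measures on the sphere. -/
noncomputable def spinMeasure (d L N : ℕ) [NeZero L] : Measure (SpinCfg d L N) :=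
  Measure.pi fun _ : TorusPt d L => sphereUniform N

/-- The Hamiltonian `H(φ) = -∑_{{x,y} edge} φ_x · φ_y`; every unordered
nearest-neighbour edge appears exactly twice in the double sum below. -/
noncomputable def hamiltonian {d L N : ℕ} [NeZero L] (φ : SpinCfg d L N) : ℝ :=
  -(1 / 2) * ∑ x : TorusPt d L, ∑ y : TorusPt d L,
    if torusAdj x y then
      ⟪(φ x : EuclideanSpace ℝ (Fin N)), (φ y : EuclideanSpace ℝ (Fin N))⟫
    else 0

/-- The Gibbs expectation `⟨f⟩_{L,N,β}`. -/
noncomputable def gibbsExp (d L N : ℕ) [NeZero L] (β : ℝ) (f : SpinCfg d L N → ℝ) : ℝ :=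
  (∫ φ, Real.exp (-β * hamiltonian φ) ∂(spinMeasure d L N))⁻¹ *
    ∫ φ, f φ * Real.exp (-β * hamiltonian φ) ∂(spinMeasure d L N)

/-- The spin-spin correlation `⟨φ_x ⬝ φ_y⟩_{L,N,β}`. -/
noncomputable def corrDot (d L N : ℕ) [NeZero L] (β : ℝ) (x y : TorusPt d L) : ℝ :=
  gibbsExp d L N β fun φ =>
    ⟪(φ x : EuclideanSpace ℝ (Fin N)), (φ y : EuclideanSpace ℝ (Fin N))⟫

/-- The correlation `⟨φ_x^1 φ_y^1⟩_{L,N,β}` of first components. -/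
noncomputable def corrOne (d L N : ℕ) [NeZero L] [NeZero N] (β : ℝ) (x y : TorusPt d L) : ℝ :=
  gibbsExp d L N β fun φ =>
    (φ x : EuclideanSpace ℝ (Fin N)) 0 * (φ y : EuclideanSpace ℝ (Fin N)) 0

/-- The origin of the torus. -/
def torusOrigin (d L : ℕ) : TorusPt d L := fun _ => 0

/-- The point `n • e_i` on the `i`-th cartesian axis. -/
def axisPt (d L : ℕ) (i : Fin d) (n : ℕ) : TorusPt d L :=
  fun k => if k = i then (n : ZMod L) else 0

/-- The sup torus norm `‖z‖_∞ = max_i min(z_i, L - z_i)`. -/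
def tnormInf {d L : ℕ} (z : TorusPt d L) : ℕ :=
  Finset.univ.sup fun i : Fin d => min (z i).val (L - (z i).val)


section RP
set_option linter.unusedSectionVars false
variable {V : Type*} [Fintype V] {S : Type*} [TopologicalSpace S] [CompactSpace S]
  [SecondCountableTopology S] [MeasurableSpace S] [BorelSpace S]
  (ν : Measure S) [IsProbabilityMeasure ν]

lemma rp_integrable {f : (V → S) → ℝ} (hf : Continuous f) :
    Integrable f (Measure.pi fun _ : V => ν) :=
  hf.integrable_of_hasCompactSupport (HasCompactSupport.of_compactSpace f)

open Classical in
lemma rp_merge (p : V → Prop) : MeasurePreserving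
    (fun q : (V → S) × (V → S) => fun x => if p x then q.1 x else q.2 x)
    ((Measure.pi fun _ : V => ν).prod (Measure.pi fun _ : V => ν)) (Measure.pi fun _ : V => ν) := by
  have hmeas : Measurable
      (fun q : (V → S) × (V → S) => fun x => if p x then q.1 x else q.2 x) := by
    refine measurable_pi_lambda _ fun x => ?_
    by_cases h : p x
    · simp only [h, if_true]; fun_prop
    · simp only [h, if_false]; fun_prop
  refine ⟨hmeas, (Measure.pi_eq fun s hs => ?_).symm⟩
  rw [Measure.map_apply hmeas (MeasurableSet.univ_pi hs)]
  have : (fun q : (V → S) × (V → S) => fun x => if p x then q.1 x else q.2 x) ⁻¹'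
      (Set.univ.pi s) = (Set.univ.pi fun x => if p x then s x else Set.univ) ×ˢ
        (Set.univ.pi fun x => if p x then Set.univ else s x) := by
    ext q
    simp only [Set.mem_preimage, Set.mem_pi, Set.mem_univ, true_imp_iff, Set.mem_prod]
    rw [← forall_and]
    refine forall_congr' fun x => ?_
    by_cases h : p x <;> simp [h]
  rw [this, Measure.prod_prod, Measure.pi_pi, Measure.pi_pi, ← Finset.prod_mul_distrib]
  refine Finset.prod_congr rfl fun x _ => ?_
  by_cases h : p x <;> simp [h]

lemma rp_reindex (τ : V ≃ V) : MeasurePreserving (fun φ : V → S => φ ∘ τ)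
    (Measure.pi fun _ : V => ν) (Measure.pi fun _ : V => ν) := by
  have hmeas : Measurable (fun φ : V → S => φ ∘ τ) :=
    measurable_pi_lambda _ fun x => measurable_pi_apply _
  refine ⟨hmeas, (Measure.pi_eq fun s hs => ?_).symm⟩
  rw [Measure.map_apply hmeas (MeasurableSet.univ_pi hs)]
  have : (fun φ : V → S => φ ∘ τ) ⁻¹' (Set.univ.pi s) = Set.univ.pi fun x => s (τ.symm x) := by
    ext φ
    simp only [Set.mem_preimage, Set.mem_pi, Set.mem_univ, true_imp_iff, Function.comp]
    exact ⟨fun h x => by simpa using h (τ.symm x), fun h x => by simpa using h (τ x)⟩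
  rw [this, Measure.pi_pi]
  exact Equiv.prod_comp τ.symm fun x => ν (s x)

lemma rp_reindex_integral (τ : V ≃ V) {f : (V → S) → ℝ} (hf : Continuous f) :
    ∫ φ, f (φ ∘ τ) ∂(Measure.pi fun _ : V => ν) = ∫ φ, f φ ∂(Measure.pi fun _ : V => ν) := by
  have h := rp_reindex ν τ
  conv_rhs => rw [← h.map_eq]
  rw [integral_map h.measurable.aemeasurable]
  rw [h.map_eq]
  exact (rp_integrable ν hf).aestronglyMeasurable

open Classical in
lemma rp_split (p : V → Prop) {f : (V → S) → ℝ} (hf : Continuous f) :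
    ∫ φ, f φ ∂(Measure.pi fun _ : V => ν) =
      ∫ χ, ∫ φ, f (fun x => if p x then χ x else φ x)
        ∂(Measure.pi fun _ : V => ν) ∂(Measure.pi fun _ : V => ν) := by
  have h := rp_merge ν p
  conv_lhs => rw [← h.map_eq]
  rw [integral_map h.measurable.aemeasurable]
  · rw [integral_prod]
    exact (h.integrable_comp_of_integrable (rp_integrable ν hf))
  · rw [h.map_eq]
    exact (rp_integrable ν hf).aestronglyMeasurable

/-- `G` depends only on the spins in `R`. -/
def RPDep (R : V → Prop) (G : (V → S) → ℝ) : Prop :=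
  ∀ φ ψ : V → S, (∀ x, R x → φ x = ψ x) → G φ = G ψ

/-- Reflection positive functions. -/
def RPPos (θ : V ≃ V) (R : V → Prop) (f : (V → S) → ℝ) : Prop :=
  Continuous f ∧ ∀ G : (V → S) → ℝ, Continuous G → RPDep R G →
    0 ≤ ∫ φ, f φ * (G φ * G (φ ∘ θ)) ∂(Measure.pi fun _ : V => ν)

variable {θ : V ≃ V} {R : V → Prop}

lemma rp_cont_comp (θ : V ≃ V) {G : (V → S) → ℝ} (hG : Continuous G) :
    Continuous fun φ : V → S => G (φ ∘ θ) :=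
  hG.comp (continuous_pi fun _ => continuous_apply _)

open Classical in
lemma rp_one (hθ : ∀ x, θ (θ x) = x) (hR2 : ∀ x, R x → R (θ x) → θ x = x) :
    RPPos ν θ R (fun _ : V → S => (1 : ℝ)) := by
  obtain ⟨P, hP⟩ : ∃ P : V → Prop, ∀ x, P x ↔ R x ∧ R (θ x) := ⟨_, fun _ => Iff.rfl⟩
  refine ⟨continuous_const, fun G hG hD => ?_⟩
  simp only [one_mul]
  have hc := rp_cont_comp θ hG
  have hcc : Continuous fun φ : V → S => G φ * G (φ ∘ θ) := hG.mul hc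
  rw [rp_split ν P hcc]
  refine integral_nonneg fun χ => ?_
  have hcm : Continuous fun φ : V → S => (fun x => if P x then χ x else φ x) := by
    refine continuous_pi fun x => ?_
    by_cases h : P x
    · simp only [h, if_true]; exact continuous_const
    · simp only [h, if_false]; exact continuous_apply _
  have hcont : Continuous fun φ : V → S => G (fun x => if P x then χ x else φ x) :=
    hG.comp hcm
  have e1 : ∀ φ ψ : V → S, G (fun x => if P x then χ x else
      (if R x then φ x else ψ x)) = G (fun x => if P x then χ x else φ x) := by
    intro φ ψ
    refine hD _ _ fun x hx => ?_
    simp [hx]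
  have e2 : ∀ φ ψ : V → S, G ((fun x => if P x then χ x else
      (if R x then φ x else ψ x)) ∘ θ) =
        G (fun x => if P x then χ x else (ψ ∘ θ) x) := by
    intro φ ψ
    refine hD _ _ fun x hx => ?_
    by_cases h : R (θ x)
    · have := hR2 x hx h
      simp [this, hP, hx]
    · simp [hP, h]
  have hc2 : Continuous fun φ : V → S =>
      G (fun x => if P x then χ x else φ x) *
      G ((fun x => if P x then χ x else φ x) ∘ θ) :=
    hcont.mul (hc.comp hcm)
  have := rp_split ν R hc2
  simp only [Pi.zero_apply]
  rw [this]
  simp only [e1, e2]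
  simp only [integral_const_mul, integral_mul_const]
  rw [rp_reindex_integral ν θ hcont]
  exact mul_self_nonneg _

lemma rp_add {f g : (V → S) → ℝ} (hf : RPPos ν θ R f) (hg : RPPos ν θ R g) :
    RPPos ν θ R (fun φ => f φ + g φ) := by
  refine ⟨hf.1.add hg.1, fun G hG hD => ?_⟩
  have hc : Continuous fun φ : V → S => G φ * G (φ ∘ θ) := hG.mul (rp_cont_comp θ hG)
  have hi1 : Integrable (fun φ : V → S => f φ * (G φ * G (φ ∘ θ))) (Measure.pi fun _ : V => ν) :=
    rp_integrable ν (hf.1.mul hc)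
  have hi2 : Integrable (fun φ : V → S => g φ * (G φ * G (φ ∘ θ))) (Measure.pi fun _ : V => ν) :=
    rp_integrable ν (hg.1.mul hc)
  simp only [add_mul]
  rw [integral_add hi1 hi2]
  exact add_nonneg (hf.2 G hG hD) (hg.2 G hG hD)

lemma rp_smul {f : (V → S) → ℝ} (hf : RPPos ν θ R f) {c : ℝ} (hc : 0 ≤ c) :
    RPPos ν θ R (fun φ => c * f φ) := by
  refine ⟨continuous_const.mul hf.1, fun G hG hD => ?_⟩
  simp only [mul_assoc]
  rw [integral_const_mul]
  exact mul_nonneg hc (hf.2 G hG hD)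

lemma rp_zero : RPPos ν θ R (fun _ : V → S => (0 : ℝ)) :=
  ⟨continuous_const, fun G hG hD => by simp⟩

lemma rp_sum {ι : Type*} (s : Finset ι) (f : ι → (V → S) → ℝ)
    (hf : ∀ j ∈ s, RPPos ν θ R (f j)) : RPPos ν θ R (fun φ => ∑ j ∈ s, f j φ) := by
  classical
  induction s using Finset.induction_on with
  | empty => simpa using rp_zero ν
  | insert a s ha ih =>
    simp only [Finset.sum_insert ha]
    exact rp_add ν (hf a (by simp)) (ih fun j hj => hf j (by simp [hj]))

lemma rp_mul {f h : (V → S) → ℝ} (hf : RPPos ν θ R f) (hh : Continuous h) (hD : RPDep R h) :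
    RPPos ν θ R (fun φ => f φ * (h φ * h (φ ∘ θ))) := by
  refine ⟨hf.1.mul (hh.mul (rp_cont_comp θ hh)), fun G hG hGD => ?_⟩
  have := hf.2 (fun φ => h φ * G φ) (hh.mul hG)
    (fun φ ψ e => by beta_reduce; rw [hD φ ψ e, hGD φ ψ e])
  convert this using 3
  ring

lemma rp_exp {K : (V → S) → ℝ} (hKc : Continuous K)
    (hK : ∀ f : (V → S) → ℝ, RPPos ν θ R f → RPPos ν θ R (fun φ => f φ * K φ))
    {f : (V → S) → ℝ} (hf : RPPos ν θ R f) :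
    RPPos ν θ R (fun φ => f φ * Real.exp (K φ)) := by
  refine ⟨hf.1.mul (Real.continuous_exp.comp hKc), fun G hG hD => ?_⟩
  have hpow : ∀ n : ℕ, RPPos ν θ R (fun φ => f φ * K φ ^ n) := by
    intro n
    induction n with
    | zero => simpa using hf
    | succ n ih =>
      have := hK _ ih
      simpa only [pow_succ, mul_assoc] using this
  have hsum : ∀ n : ℕ, RPPos ν θ R
      (fun φ => f φ * ∑ m ∈ Finset.range n, K φ ^ m / (m.factorial : ℝ)) := by
    intro n
    have := rp_sum ν (Finset.range n) (fun m φ => ((m.factorial : ℝ)⁻¹) * (f φ * K φ ^ m))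
      (fun m _ => rp_smul ν (hpow m) (by positivity))
    convert this using 2 with φ
    rw [Finset.mul_sum]
    refine Finset.sum_congr rfl fun m _ => ?_
    ring
  have hc := hG.mul (rp_cont_comp θ hG)
  have hlim := tendsto_integral_of_dominated_convergence
    (μ := Measure.pi fun _ : V => ν)
    (F := fun (n : ℕ) φ => (f φ * ∑ m ∈ Finset.range n, K φ ^ m / (m.factorial : ℝ)) *
      (G φ * G (φ ∘ θ)))
    (f := fun φ => f φ * Real.exp (K φ) * (G φ * G (φ ∘ θ)))
    (fun φ => ‖f φ‖ * Real.exp (|K φ|) * ‖G φ * G (φ ∘ θ)‖)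
    (fun n => (rp_integrable ν ((hsum n).1.mul hc)).aestronglyMeasurable)
    (rp_integrable ν ((hf.1.norm.mul (Real.continuous_exp.comp hKc.abs)).mul hc.norm))
    (fun n => Filter.Eventually.of_forall fun φ => by
      rw [norm_mul, norm_mul]
      gcongr
      calc ‖∑ m ∈ Finset.range n, K φ ^ m / (m.factorial : ℝ)‖
          ≤ ∑ m ∈ Finset.range n, |K φ| ^ m / (m.factorial : ℝ) := by
            refine (norm_sum_le _ _).trans (le_of_eq ?_)
            refine Finset.sum_congr rfl fun m _ => ?_
            simp
        _ ≤ _ := Real.sum_le_exp_of_nonneg (abs_nonneg _) n)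
    (Filter.Eventually.of_forall fun φ => by
      have h := (NormedSpace.expSeries_div_hasSum_exp (𝔸 := ℝ) (K φ)).tendsto_sum_nat
      rw [← Real.exp_eq_exp_ℝ] at h
      exact (h.const_mul (f φ)).mul_const _)
  exact ge_of_tendsto' hlim fun n => (hsum n).2 G hG hD

end RP

section Model
open scoped RealInnerProductSpace

lemma spin_inner_eq {N : ℕ} (u v : SpinSphere N) :
    ⟪(u : EuclideanSpace ℝ (Fin N)), (v : EuclideanSpace ℝ (Fin N))⟫ =
      ∑ k, (u : EuclideanSpace ℝ (Fin N)) k * (v : EuclideanSpace ℝ (Fin N)) k := by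
  rw [PiLp.inner_apply]
  refine Finset.sum_congr rfl fun k _ => ?_
  simp [mul_comm]

lemma spin_cont_coord {V : Type*} {N : ℕ} (x : V) (k : Fin N) :
    Continuous fun φ : V → SpinSphere N => (φ x : EuclideanSpace ℝ (Fin N)) k := by
  fun_prop

lemma spin_cont_inner {V : Type*} {N : ℕ} (x y : V) :
    Continuous fun φ : V → SpinSphere N =>
      ⟪(φ x : EuclideanSpace ℝ (Fin N)), (φ y : EuclideanSpace ℝ (Fin N))⟫ := by
  fun_prop

open Classical in
theorem rp_main {V : Type*} [Fintype V] {N : ℕ} (ν : Measure (SpinSphere N))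
    [IsProbabilityMeasure ν] (θ : V ≃ V) (R : V → Prop) (hθ : ∀ x, θ (θ x) = x)
    (hR1 : ∀ x, R x ∨ R (θ x)) (hR2 : ∀ x, R x → R (θ x) → θ x = x)
    (J : V → V → ℝ) (hJ0 : ∀ x y, 0 ≤ J x y) (hJθ : ∀ x y, J (θ x) (θ y) = J x y)
    (hJ : ∀ x y, J x y ≠ 0 → ¬ (R x ∧ R y) → ¬ (R (θ x) ∧ R (θ y)) → y = θ x)
    {ι : Type*} [Fintype ι] (c : ι → ℝ) (p : ι → V) (hp : ∀ a, R (p a)) :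
    0 ≤ ∫ φ : V → SpinSphere N, (∑ a, ∑ b, c a * c b *
        ⟪(φ (p a) : EuclideanSpace ℝ (Fin N)), (φ (θ (p b)) : EuclideanSpace ℝ (Fin N))⟫) *
      Real.exp (∑ x, ∑ y, J x y *
        ⟪(φ x : EuclideanSpace ℝ (Fin N)), (φ y : EuclideanSpace ℝ (Fin N))⟫)
      ∂(Measure.pi fun _ : V => ν) := by
  let w : V → V → ℝ := fun x y =>
    if R x ∧ R y then (if R (θ x) ∧ R (θ y) then 1 / 2 else 1) else 0
  let kk : V → V → ℝ := fun x y =>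
    if ¬ (R x ∧ R y) ∧ ¬ (R (θ x) ∧ R (θ y)) then 1 else 0
  have hwk : ∀ x y, w x y + w (θ x) (θ y) + kk x y = 1 := by
    intro x y
    simp only [w, kk, hθ]
    by_cases h1 : R x ∧ R y <;> by_cases h2 : R (θ x) ∧ R (θ y) <;>
      simp only [h1, h2, if_true, if_false, not_true, not_false_iff, and_true, true_and,
        and_self, false_and, and_false] <;> norm_num
  let W : (V → SpinSphere N) → ℝ := fun φ => ∑ x, ∑ y, J x y * w x y *
        ⟪(φ x : EuclideanSpace ℝ (Fin N)), (φ y : EuclideanSpace ℝ (Fin N))⟫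
  let K : (V → SpinSphere N) → ℝ := fun φ => ∑ x, ∑ y, J x y * kk x y *
        ⟪(φ x : EuclideanSpace ℝ (Fin N)), (φ y : EuclideanSpace ℝ (Fin N))⟫
  have hWc : Continuous W := by
    refine continuous_finsetSum _ fun x _ => continuous_finsetSum _ fun y _ => ?_
    exact continuous_const.mul (spin_cont_inner x y)
  have hKc : Continuous K := by
    refine continuous_finsetSum _ fun x _ => continuous_finsetSum _ fun y _ => ?_
    exact continuous_const.mul (spin_cont_inner x y)
  have hWθ : ∀ φ : V → SpinSphere N, W (φ ∘ θ) = ∑ x, ∑ y, J x y * w (θ x) (θ y) *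
        ⟪(φ x : EuclideanSpace ℝ (Fin N)), (φ y : EuclideanSpace ℝ (Fin N))⟫ := by
    intro φ
    simp only [W]
    rw [← Equiv.sum_comp θ]
    refine Finset.sum_congr rfl fun x _ => ?_
    rw [← Equiv.sum_comp θ]
    refine Finset.sum_congr rfl fun y _ => ?_
    simp only [Function.comp, hθ, hJθ]
  have hdec : ∀ φ : V → SpinSphere N, (∑ x, ∑ y, J x y *
        ⟪(φ x : EuclideanSpace ℝ (Fin N)), (φ y : EuclideanSpace ℝ (Fin N))⟫) =
      K φ + (W φ + W (φ ∘ θ)) := by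
    intro φ
    rw [hWθ]
    simp only [W, K]
    simp only [← Finset.sum_add_distrib]
    refine Finset.sum_congr rfl fun x _ => Finset.sum_congr rfl fun y _ => ?_
    have := hwk x y
    linear_combination (-(J x y *
      ⟪(φ x : EuclideanSpace ℝ (Fin N)), (φ y : EuclideanSpace ℝ (Fin N))⟫)) * this
  have hWD : RPDep R W := by
    intro φ ψ e
    simp only [W]
    refine Finset.sum_congr rfl fun x _ => Finset.sum_congr rfl fun y _ => ?_
    by_cases h : R x ∧ R y
    · rw [e x h.1, e y h.2]
    · simp [w, h]
  have hcoordD : ∀ x, R x → ∀ k : Fin N,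
      RPDep R (fun φ : V → SpinSphere N => (φ x : EuclideanSpace ℝ (Fin N)) k) := by
    intro x hx k φ ψ e
    beta_reduce
    rw [e x hx]
  have hKpos : ∀ f : (V → SpinSphere N) → ℝ, RPPos ν θ R f →
      RPPos ν θ R (fun φ => f φ * K φ) := by
    intro f hf
    simp only [K, Finset.mul_sum]
    refine rp_sum ν _ _ fun x _ => rp_sum ν _ _ fun y _ => ?_
    by_cases h : J x y * kk x y = 0
    · simp only [h, zero_mul, mul_zero]
      exact rp_zero ν
    have hJne : J x y ≠ 0 := left_ne_zero_of_mul h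
    have hk : ¬ (R x ∧ R y) ∧ ¬ (R (θ x) ∧ R (θ y)) := by
      by_contra hcon
      exact h (by simp only [kk, if_neg hcon, mul_zero])
    have hy := hJ x y hJne hk.1 hk.2
    subst hy
    have hnn : 0 ≤ J x (θ x) * kk x (θ x) := by
      refine mul_nonneg (hJ0 _ _) ?_
      simp only [kk]; split_ifs <;> norm_num
    have hmain : RPPos ν θ R (fun φ => J x (θ x) * kk x (θ x) * ∑ k, (f φ *
        ((φ x : EuclideanSpace ℝ (Fin N)) k * (φ (θ x) : EuclideanSpace ℝ (Fin N)) k))) := by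
      refine rp_smul ν (rp_sum ν _ _ fun k _ => ?_) hnn
      rcases hR1 x with hx | hx
      · exact rp_mul ν hf (spin_cont_coord x k) (hcoordD x hx k)
      · have := rp_mul ν hf (spin_cont_coord (θ x) k) (hcoordD (θ x) hx k)
        convert this using 3 with φ
        simp only [Function.comp, hθ]
        ring
    convert hmain using 2 with φ
    rw [spin_inner_eq, ← Finset.mul_sum]
    ring
  have h1 := rp_exp ν hKc hKpos (rp_one (R := R) ν hθ hR2)
  have h2 := rp_mul ν h1 (Real.continuous_exp.comp hWc)
    (fun φ ψ e => by simp only [Function.comp]; rw [hWD φ ψ e])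
  let h : Fin N → (V → SpinSphere N) → ℝ := fun k φ =>
    ∑ a, c a * (φ (p a) : EuclideanSpace ℝ (Fin N)) k
  have h3 := rp_sum ν Finset.univ _ (fun k (_ : k ∈ Finset.univ) => rp_mul ν h2
    (h := h k) (continuous_finsetSum _ fun a _ => continuous_const.mul (spin_cont_coord _ _))
    (fun φ ψ e => Finset.sum_congr rfl fun a _ => by rw [e _ (hp a)]))
  have h4 := h3.2 (fun _ => 1) continuous_const (fun _ _ _ => rfl)
  convert h4 using 3 with φ
  beta_reduce
  rw [hdec, Real.exp_add, Real.exp_add, ← Finset.mul_sum]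
  have : (∑ a, ∑ b, c a * c b *
        ⟪(φ (p a) : EuclideanSpace ℝ (Fin N)), (φ (θ (p b)) : EuclideanSpace ℝ (Fin N))⟫) =
      ∑ k, h k φ * h k (φ ∘ θ) := by
    simp only [h, Finset.sum_mul_sum, spin_inner_eq]
    simp only [Finset.mul_sum]
    conv_rhs => rw [Finset.sum_comm]
    refine Finset.sum_congr rfl fun a _ => ?_
    conv_rhs => rw [Finset.sum_comm]
    refine Finset.sum_congr rfl fun b _ => Finset.sum_congr rfl fun k _ => ?_
    simp only [Function.comp]
    ring
  rw [this]
  simp only [Function.comp_apply]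
  ring

lemma sphereUniform_prob {N : ℕ} (hN : 1 ≤ N) : IsProbabilityMeasure (sphereUniform N) := by
  have : Nonempty (Fin N) := ⟨⟨0, hN⟩⟩
  refine ⟨?_⟩
  unfold sphereUniform
  rw [Measure.smul_apply, smul_eq_mul]
  refine ENNReal.inv_mul_cancel ?_ (measure_ne_top _ _)
  have : Nonempty (SpinSphere N) := (NormedSpace.sphere_nonempty.2 zero_le_one).to_subtype
  exact (isOpen_univ.measure_pos _ Set.univ_nonempty).ne'

end Model

section Torus
open scoped RealInnerProductSpace

variable {d L N : ℕ} [NeZero L]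

/-- Reflection of the `i`-th coordinate. -/
def tRefl (i : Fin d) (c : ZMod L) : TorusPt d L ≃ TorusPt d L where
  toFun x := Function.update x i (c - x i)
  invFun x := Function.update x i (c - x i)
  left_inv x := by simp
  right_inv x := by simp

lemma tRefl_tRefl (i : Fin d) (c : ZMod L) (x : TorusPt d L) :
    tRefl i c (tRefl i c x) = x := (tRefl i c).left_inv x

lemma tRefl_same (i : Fin d) (c : ZMod L) (x : TorusPt d L) : tRefl i c x i = c - x i := by
  simp [tRefl]

lemma tRefl_apply (i : Fin d) (c : ZMod L) (x : TorusPt d L) (k : Fin d) :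
    tRefl i c x k = if k = i then c - x i else x k := by
  simp [tRefl, Function.update_apply]

lemma tRefl_adj1 (i : Fin d) (c : ZMod L) (x y : TorusPt d L) (h : torusAdj x y) :
    torusAdj (tRefl i c x) (tRefl i c y) := by
  obtain ⟨j, h⟩ := h
  refine ⟨j, ?_⟩
  by_cases hj : j = i
  · subst hj
    rcases h with h | h
    · right
      subst h
      ext k
      simp only [tRefl_apply, Function.update_apply]
      split_ifs <;> first | rfl | ring
    · left
      subst h
      ext k
      simp only [tRefl_apply, Function.update_apply]
      split_ifs <;> first | rfl | ring
  · have hj' : i ≠ j := fun e => hj e.symm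
    rcases h with h | h
    · left
      subst h
      ext k
      simp only [tRefl_apply, Function.update_apply]
      by_cases h1 : k = i <;> by_cases h2 : k = j <;> simp_all
    · right
      subst h
      ext k
      simp only [tRefl_apply, Function.update_apply]
      by_cases h1 : k = i <;> by_cases h2 : k = j <;> simp_all

lemma tRefl_adj (i : Fin d) (c : ZMod L) (x y : TorusPt d L) :
    torusAdj (tRefl i c x) (tRefl i c y) ↔ torusAdj x y := by
  refine ⟨fun h => ?_, tRefl_adj1 i c x y⟩
  have := tRefl_adj1 i c _ _ h
  rwa [tRefl_tRefl, tRefl_tRefl] at this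

lemma tShift_adj1 (v x y : TorusPt d L) (h : torusAdj x y) : torusAdj (x + v) (y + v) := by
  obtain ⟨j, h⟩ := h
  refine ⟨j, ?_⟩
  rcases h with h | h
  · left
    subst h
    ext k
    by_cases h2 : k = j
    · subst h2; simp; ring
    · simp [h2]
  · right
    subst h
    ext k
    by_cases h2 : k = j
    · subst h2; simp; ring
    · simp [h2]

lemma tShift_adj (v x y : TorusPt d L) : torusAdj (x + v) (y + v) ↔ torusAdj x y := by
  refine ⟨fun h => ?_, tShift_adj1 v x y⟩
  have := tShift_adj1 (-v) _ _ h
  simpa using this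

lemma ham_cont : Continuous (hamiltonian : SpinCfg d L N → ℝ) := by
  unfold hamiltonian
  refine continuous_const.mul (continuous_finsetSum _ fun x _ => continuous_finsetSum _ fun y _ => ?_)
  split_ifs
  · exact spin_cont_inner x y
  · exact continuous_const

lemma weight_cont (β : ℝ) :
    Continuous fun φ : SpinCfg d L N => Real.exp (-β * hamiltonian φ) :=
  Real.continuous_exp.comp (continuous_const.mul ham_cont)

lemma ham_comp (τ : TorusPt d L ≃ TorusPt d L)
    (hτ : ∀ x y, torusAdj (τ x) (τ y) ↔ torusAdj x y) (φ : SpinCfg d L N) :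
    hamiltonian (φ ∘ τ : SpinCfg d L N) = hamiltonian φ := by
  unfold hamiltonian
  congr 1
  conv_rhs => rw [← Equiv.sum_comp τ]
  refine Finset.sum_congr rfl fun x _ => ?_
  conv_rhs => rw [← Equiv.sum_comp τ]
  refine Finset.sum_congr rfl fun y _ => ?_
  simp only [hτ, Function.comp]

lemma corr_comp (hN : 1 ≤ N) (β : ℝ) (τ : TorusPt d L ≃ TorusPt d L)
    (hτ : ∀ x y, torusAdj (τ x) (τ y) ↔ torusAdj x y) (x y : TorusPt d L) :
    corrDot d L N β (τ x) (τ y) = corrDot d L N β x y := by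
  have := sphereUniform_prob hN
  have hc : Continuous fun φ : SpinCfg d L N =>
      ⟪(φ x : EuclideanSpace ℝ (Fin N)), (φ y : EuclideanSpace ℝ (Fin N))⟫ *
        Real.exp (-β * hamiltonian φ) := (spin_cont_inner x y).mul (weight_cont β)
  have h := rp_reindex_integral (sphereUniform N) τ hc
  simp only [ham_comp τ hτ, Function.comp] at h
  simp only [corrDot, gibbsExp, spinMeasure]
  rw [h]

lemma corr_symm (β : ℝ) (x y : TorusPt d L) :
    corrDot d L N β x y = corrDot d L N β y x := by
  simp only [corrDot, real_inner_comm]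

lemma corr_shift (hN : 1 ≤ N) (β : ℝ) (x y : TorusPt d L) :
    corrDot d L N β x y = corrDot d L N β 0 (y - x) := by
  have := corr_comp hN β (Equiv.addRight x) (fun a b => tShift_adj x a b) 0 (y - x)
  simpa using this

lemma corr_neg (hN : 1 ≤ N) (β : ℝ) (z : TorusPt d L) :
    corrDot d L N β 0 (-z) = corrDot d L N β 0 z := by
  rw [corr_symm, corr_shift hN]; simp

lemma corr_refl (hN : 1 ≤ N) (β : ℝ) (i : Fin d) (z : TorusPt d L) :
    corrDot d L N β 0 (tRefl i 0 z) = corrDot d L N β 0 z := by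
  have h := corr_comp hN β (tRefl i 0) (tRefl_adj i 0) 0 z
  rw [← h]
  congr 1
  ext k
  simp [tRefl_apply]

lemma corr_rp (hN : 1 ≤ N) {β : ℝ} (hβ : 0 ≤ β) (i : Fin d) (c : ZMod L) (r : ZMod L → Prop)
    (h1 : ∀ a, r a ∨ r (c - a)) (h2 : ∀ a, r a → r (c - a) → c - a = a)
    (h3 : ∀ a b, (b = a + 1 ∨ b = a - 1) → ¬ (r a ∧ r b) → ¬ (r (c - a) ∧ r (c - b)) → b = c - a)
    {ι : Type*} [Fintype ι] (w : ι → ℝ) (p : ι → TorusPt d L) (hp : ∀ a, r (p a i)) :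
    0 ≤ ∑ a, ∑ b, w a * w b * corrDot d L N β (p a) (tRefl i c (p b)) := by
  have := sphereUniform_prob hN
  have key := rp_main (sphereUniform N) (tRefl i c) (fun x => r (x i)) (tRefl_tRefl i c)
    (fun x => by simpa only [tRefl_same] using h1 (x i))
    (fun x hx hx' => by
      rw [tRefl_same] at hx'
      have := h2 _ hx hx'
      ext k
      rw [tRefl_apply]
      split_ifs with hk
      · rw [hk, this]
      · rfl)
    (fun x y => if torusAdj x y then β / 2 else 0)
    (fun x y => by beta_reduce; split_ifs <;> positivity)
    (fun x y => by simp only [tRefl_adj])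
    (fun x y hJ ha hb => by
      have hadj : torusAdj x y := by
        by_contra hcon
        exact hJ (if_neg hcon)
      simp only [tRefl_same] at hb
      obtain ⟨j, hj⟩ := hadj
      by_cases hji : j = i
      · subst hji
        have hyi : y j = x j + 1 ∨ y j = x j - 1 := by
          rcases hj with hj | hj <;> simp [hj]
        have e := h3 _ _ hyi ha hb
        ext k
        rw [tRefl_apply]
        split_ifs with hk
        · rw [hk, e]
        · rcases hj with hj | hj <;> simp [hj, hk]
      · exfalso
        have hyi : y i = x i := by
          rcases hj with hj | hj <;> simp [hj, Function.update_apply, Ne.symm hji] <;>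
            exact fun e => absurd e.symm hji
        rw [hyi] at ha hb
        rcases h1 (x i) with h | h
        · exact ha ⟨h, h⟩
        · exact hb ⟨h, h⟩)
    w p hp
  have hw : ∀ φ : SpinCfg d L N, (∑ x : TorusPt d L, ∑ y : TorusPt d L,
      (if torusAdj x y then β / 2 else 0) *
        ⟪(φ x : EuclideanSpace ℝ (Fin N)), (φ y : EuclideanSpace ℝ (Fin N))⟫) =
      -β * hamiltonian φ := by
    intro φ
    unfold hamiltonian
    rw [← mul_assoc]
    simp only [Finset.mul_sum]
    refine Finset.sum_congr rfl fun x _ => Finset.sum_congr rfl fun y _ => ?_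
    split_ifs <;> ring
  have hZ : 0 ≤ (∫ φ, Real.exp (-β * hamiltonian φ) ∂(spinMeasure d L N))⁻¹ :=
    inv_nonneg.2 (integral_nonneg fun φ => (Real.exp_pos _).le)
  have hint : ∀ a b, Integrable (fun φ : SpinCfg d L N => w a * w b *
      (⟪(φ (p a) : EuclideanSpace ℝ (Fin N)),
        (φ (tRefl i c (p b)) : EuclideanSpace ℝ (Fin N))⟫ * Real.exp (-β * hamiltonian φ)))
      (Measure.pi fun _ : TorusPt d L => sphereUniform N) := fun a b =>
    rp_integrable _ (continuous_const.mul ((spin_cont_inner _ _).mul (weight_cont β)))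
  refine (mul_nonneg hZ key).trans_eq (Eq.symm ?_)
  simp only [hw, Finset.sum_mul, corrDot, gibbsExp, spinMeasure]
  simp only [mul_assoc] at hint
  simp only [mul_assoc]
  rw [integral_finsetSum _ fun a _ => integrable_finsetSum _ fun b _ => hint a b, Finset.mul_sum]
  refine Finset.sum_congr rfl fun a _ => ?_
  rw [integral_finsetSum _ fun b _ => hint a b, Finset.mul_sum]
  refine Finset.sum_congr rfl fun b _ => ?_
  rw [integral_const_mul, integral_const_mul]
  ring

/-- The point `y + z e_i`. -/
def linePt (i : Fin d) (y : TorusPt d L) (z : ZMod L) : TorusPt d L :=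
  fun k => y k + if k = i then z else 0

/-- The two-point sum. -/
noncomputable def uFun (N : ℕ) (β : ℝ) (i : Fin d) (y : TorusPt d L) (z : ZMod L) : ℝ :=
  corrDot d L N β 0 (linePt i y z) + corrDot d L N β 0 (linePt i 0 z)

lemma uFun_neg (hN : 1 ≤ N) (β : ℝ) (i : Fin d) (y : TorusPt d L) (hy : y i = 0) (z : ZMod L) :
    uFun N β i y (-z) = uFun N β i y z := by
  unfold uFun
  rw [← corr_refl hN β i (linePt i y z), ← corr_refl hN β i (linePt i 0 z)]
  congr 2 <;> ext k <;> by_cases hk : k = i <;> simp [tRefl_apply, linePt, hk, hy]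

lemma uFun_convex (hN : 1 ≤ N) {β : ℝ} (hβ : 0 ≤ β) (i : Fin d) (c : ZMod L) (r : ZMod L → Prop)
    (h1 : ∀ a, r a ∨ r (c - a)) (h2 : ∀ a, r a → r (c - a) → c - a = a)
    (h3 : ∀ a b, (b = a + 1 ∨ b = a - 1) → ¬ (r a ∧ r b) → ¬ (r (c - a) ∧ r (c - b)) → b = c - a)
    (y : TorusPt d L) (hy : y i = 0) (s t : ZMod L) (hs : r s) (ht : r t) :
    2 * uFun N β i y (s + t - c) ≤ uFun N β i y (s + s - c) + uFun N β i y (t + t - c) := by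
  have key := corr_rp (N := N) hN hβ i c r h1 h2 h3 (ι := Fin 4) ![1, 1, -1, -1]
    ![linePt i y s, linePt i 0 s, linePt i y t, linePt i 0 t] (by
      intro a; fin_cases a <;> simp [linePt, hy, hs, ht])
  have e1 : ∀ a b : ZMod L, corrDot d L N β (linePt i y a) (tRefl i c (linePt i y b)) =
      corrDot d L N β 0 (linePt i 0 (a + b - c)) := by
    intro a b
    rw [corr_shift hN, ← corr_neg hN]
    congr 1
    ext k
    by_cases hk : k = i
    · subst hk; simp [tRefl_apply, linePt, hy]; ring
    · simp [tRefl_apply, linePt, hk]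
  have e2 : ∀ a b : ZMod L, corrDot d L N β (linePt i 0 a) (tRefl i c (linePt i 0 b)) =
      corrDot d L N β 0 (linePt i 0 (a + b - c)) := by
    intro a b
    rw [corr_shift hN, ← corr_neg hN]
    congr 1
    ext k
    by_cases hk : k = i
    · subst hk; simp [tRefl_apply, linePt]; ring
    · simp [tRefl_apply, linePt, hk]
  have e3 : ∀ a b : ZMod L, corrDot d L N β (linePt i y a) (tRefl i c (linePt i 0 b)) =
      corrDot d L N β 0 (linePt i y (a + b - c)) := by
    intro a b
    rw [corr_shift hN, ← corr_neg hN]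
    congr 1
    ext k
    by_cases hk : k = i
    · subst hk; simp [tRefl_apply, linePt, hy]; ring
    · simp [tRefl_apply, linePt, hk]
  have e4 : ∀ a b : ZMod L, corrDot d L N β (linePt i 0 a) (tRefl i c (linePt i y b)) =
      corrDot d L N β 0 (linePt i y (a + b - c)) := by
    intro a b
    rw [corr_shift hN, ← corr_refl hN β i]
    congr 1
    ext k
    by_cases hk : k = i
    · subst hk; simp [tRefl_apply, linePt, hy]; ring
    · simp [tRefl_apply, linePt, hk]
  simp [Fin.sum_univ_four, e1, e2, e3, e4] at key
  unfold uFun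
  rw [add_comm t s] at key
  linarith

lemma zval_succ (a : ZMod L) : (a + 1).val = if a.val + 1 = L then 0 else a.val + 1 := by
  have ha := ZMod.val_lt a
  have e : a + 1 = ((a.val + 1 : ℕ) : ZMod L) := by simp
  rw [e, ZMod.val_natCast]
  split_ifs with h
  · rw [h, Nat.mod_self]
  · exact Nat.mod_eq_of_lt (by omega)

lemma zval_edge (a : ZMod L) : (-1 - a).val = L - 1 - a.val := by
  have ha := ZMod.val_lt a
  have e : -1 - a = ((L - 1 - a.val : ℕ) : ZMod L) := by
    rw [Nat.sub_sub, Nat.cast_sub (by omega)]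
    simp
    ring
  rw [e, ZMod.val_natCast]
  exact Nat.mod_eq_of_lt (by omega)

lemma zval_site (a : ZMod L) : (0 - a).val = if a.val = 0 then 0 else L - a.val := by
  rw [zero_sub, ZMod.neg_val]
  simp [ZMod.val_eq_zero]

lemma conv_edge (hN : 1 ≤ N) {β : ℝ} (hβ : 0 ≤ β) (i : Fin d) {l : ℕ} (hl : L = l + l)
    (y : TorusPt d L) (hy : y i = 0) (t : ℕ) (ht : t + 1 < l) :
    2 * uFun N β i y ((2 * t + 2 : ℕ) : ZMod L) ≤
      uFun N β i y ((2 * t + 1 : ℕ) : ZMod L) + uFun N β i y ((2 * t + 3 : ℕ) : ZMod L) := by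
  have h := uFun_convex hN hβ i (-1) (fun a : ZMod L => a.val < l)
    (fun a => by rw [zval_edge]; have := ZMod.val_lt a; omega)
    (fun a h h' => by rw [zval_edge] at h'; have := ZMod.val_lt a; omega)
    (fun a b hab h h' => by
      rw [zval_edge, zval_edge] at h'
      apply ZMod.val_injective
      rw [zval_edge]
      have ha := ZMod.val_lt a
      have hb := ZMod.val_lt b
      rcases hab with hab | hab
      · have e := zval_succ a
        rw [← hab] at e
        split_ifs at e <;> omega
      · have hab' : a = b + 1 := by rw [hab]; ring
        have e := zval_succ b
        rw [← hab'] at e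
        split_ifs at e <;> omega)
    y hy (t : ZMod L) ((t + 1 : ℕ) : ZMod L)
    (by rw [ZMod.val_natCast, Nat.mod_eq_of_lt] <;> omega)
    (by rw [ZMod.val_natCast, Nat.mod_eq_of_lt] <;> omega)
  convert h using 3 <;> push_cast <;> ring

lemma conv_site (hN : 1 ≤ N) {β : ℝ} (hβ : 0 ≤ β) (i : Fin d) {l : ℕ} (hl : L = l + l)
    (y : TorusPt d L) (hy : y i = 0) (t : ℕ) (ht : t < l) :
    2 * uFun N β i y ((2 * t + 1 : ℕ) : ZMod L) ≤
      uFun N β i y ((2 * t : ℕ) : ZMod L) + uFun N β i y ((2 * t + 2 : ℕ) : ZMod L) := by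
  have h := uFun_convex hN hβ i 0 (fun a : ZMod L => a.val ≤ l)
    (fun a => by rw [zval_site]; have := ZMod.val_lt a; split_ifs <;> omega)
    (fun a h h' => by
      apply ZMod.val_injective
      rw [zval_site] at h' ⊢; have := ZMod.val_lt a
      split_ifs at h' ⊢ <;> omega)
    (fun a b hab h h' => by
      rw [zval_site, zval_site] at h'
      apply ZMod.val_injective
      rw [zval_site]
      have ha := ZMod.val_lt a
      have hb := ZMod.val_lt b
      rcases hab with hab | hab
      · have e := zval_succ a
        rw [← hab] at e
        split_ifs at e h' ⊢ <;> omega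
      · have hab' : a = b + 1 := by rw [hab]; ring
        have e := zval_succ b
        rw [← hab'] at e
        split_ifs at e h' ⊢ <;> omega)
    y hy (t : ZMod L) ((t + 1 : ℕ) : ZMod L)
    (by rw [ZMod.val_natCast, Nat.mod_eq_of_lt] <;> omega)
    (by rw [ZMod.val_natCast, Nat.mod_eq_of_lt] <;> omega)
  convert h using 3 <;> push_cast <;> ring

lemma conv_all (hN : 1 ≤ N) {β : ℝ} (hβ : 0 ≤ β) (i : Fin d) (hL : Even L)
    (y : TorusPt d L) (hy : y i = 0) (n : ℕ) (hn : n + 1 < L) :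
    2 * uFun N β i y ((n + 1 : ℕ) : ZMod L) ≤
      uFun N β i y ((n : ℕ) : ZMod L) + uFun N β i y ((n + 2 : ℕ) : ZMod L) := by
  obtain ⟨l, hl⟩ := hL
  rcases Nat.even_or_odd' n with ⟨t, rfl | rfl⟩
  · exact conv_site hN hβ i hl y hy t (by omega)
  · exact conv_edge hN hβ i hl y hy t (by omega)

lemma mono_of_conv (u : ℕ → ℝ) (L : ℕ) (hc : ∀ n, n + 1 < L → 2 * u (n + 1) ≤ u n + u (n + 2))
    (hs : ∀ n, n ≤ L → u (L - n) = u n) (n : ℕ) (hn : 2 * (n + 1) ≤ L) : u (n + 1) ≤ u n := by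
  have hD : ∀ k, n + k + 1 ≤ L → u (n + 1) - u n ≤ u (n + k + 1) - u (n + k) := by
    intro k
    induction k with
    | zero => intro _; simp
    | succ k ih =>
      intro hk
      have a := ih (by omega)
      have b := hc (n + k) (by omega)
      have e1 : n + (k + 1) + 1 = n + k + 2 := by ring
      have e2 : n + (k + 1) = n + k + 1 := by ring
      rw [e1, e2]
      linarith
  have h := hD (L - 1 - 2 * n) (by omega)
  have e1 : n + (L - 1 - 2 * n) + 1 = L - n := by omega
  have e2 : n + (L - 1 - 2 * n) = L - (n + 1) := by omega
  rw [e1, e2, hs _ (by omega), hs _ (by omega)] at h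
  linarith

end Torus

/-- **Site-monotonicity for the spin O(N) model along an axis.**
For every direction `i`, every `y ∈ T_L` with `y·e_i = 0`, the function
`n ↦ ⟨φ_o ⬝ φ_{y + n e_i}⟩ + ⟨φ_o ⬝ φ_{n e_i}⟩` is non-increasing for integer
`n ∈ (0, L/2]`. -/
theorem spin_avg_two_point_nonincreasing
    (d L N : ℕ) [NeZero L] (hd : 2 ≤ d) (hL : Even L) (hN : 1 ≤ N)
    (β : ℝ) (hβ : 0 ≤ β) (i : Fin d) (y : TorusPt d L) (hy : y i = 0)
    (m n : ℕ) (hm : 0 < m) (hmn : m ≤ n) (hn : 2 * n ≤ L) :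
    corrDot d L N β (torusOrigin d L) (fun k => y k + if k = i then (n : ZMod L) else 0)
        + corrDot d L N β (torusOrigin d L) (axisPt d L i n) ≤
      corrDot d L N β (torusOrigin d L) (fun k => y k + if k = i then (m : ZMod L) else 0)
        + corrDot d L N β (torusOrigin d L) (axisPt d L i m) := by
  have hsym : ∀ k : ℕ, k ≤ L → uFun N β i y ((L - k : ℕ) : ZMod L) =
      uFun N β i y (k : ZMod L) := by
    intro k hk
    rw [← uFun_neg hN β i y hy (k : ZMod L), Nat.cast_sub hk]
    simp
  have hstep := mono_of_conv (fun k : ℕ => uFun N β i y (k : ZMod L)) L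
    (fun k hk => conv_all hN hβ i hL y hy k hk) hsym
  have hmono : uFun N β i y (n : ZMod L) ≤ uFun N β i y (m : ZMod L) := by
    induction n, hmn using Nat.le_induction with
    | base => exact le_rfl
    | succ k hk ih => exact (hstep k hn).trans (ih (by omega))
  have ho : torusOrigin d L = 0 := rfl
  have hax : ∀ k : ℕ, axisPt d L i k = linePt i 0 (k : ZMod L) := by
    intro k
    ext j
    simp [axisPt, linePt]
  rw [ho, hax, hax]
  exact hmono
end

section
/- Let d ≥ 3 and N ≥ 1. There exists β₀′ < ∞ such that for every β > β₀′ there exist a constant C = C(β,d,N) > 0 and L₀ < ∞ such that for every even integer L > L₀ and every z ∈ T_L with ‖z‖_∞ < L/8 one has ⟨φ_o · φ_z⟩_{L,N,β} ≥ C. -/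
open MeasureTheory Metric
open scoped RealInnerProductSpace BigOperators

namespace SpinRP

set_option linter.unusedSectionVars false

section kernel
variable {H : Type*} [NormedAddCommGroup H] [InnerProductSpace ℝ H] [FiniteDimensional ℝ H]
  [MeasurableSpace H] [BorelSpace H]

theorem gauss_integrable (c : ℝ) (hc : 0 < c) :
    Integrable (fun s : H => Real.exp (-c * ‖s‖ ^ 2)) := by
  have := GaussianFourier.integrable_cexp_neg_mul_sq_norm_add (V := H) (b := (c : ℂ)) (by simpa using hc) 0 0
  have h2 := this.norm
  refine h2.congr (Filter.Eventually.of_forall fun s => ?_)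
  simp [Complex.norm_exp]
  norm_cast
  exact Or.inl rfl

theorem gauss_par (a b s : H) :
    2 * ‖a - s‖ ^ 2 + 2 * ‖b - s‖ ^ 2
      = 4 * ‖s - (1 / 2 : ℝ) • (a + b)‖ ^ 2 + ‖a - b‖ ^ 2 := by
  simp only [← real_inner_self_eq_norm_sq, inner_sub_left, inner_sub_right, inner_smul_left,
    inner_smul_right, inner_add_left, inner_add_right]
  simp only [real_inner_comm a s, real_inner_comm b s, real_inner_comm a b]
  simp
  ring

theorem gauss_conv (a b : H) :
    ∫ s : H, Real.exp (-2 * ‖a - s‖ ^ 2) * Real.exp (-2 * ‖b - s‖ ^ 2)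
      = (∫ s : H, Real.exp (-4 * ‖s‖ ^ 2)) * Real.exp (-‖a - b‖ ^ 2) := by
  rw [← integral_sub_right_eq_self (μ := (volume : Measure H)) (fun s : H => Real.exp (-4 * ‖s‖ ^ 2))
    ((1 / 2 : ℝ) • (a + b)), ← integral_mul_const]
  refine integral_congr_ae (Filter.Eventually.of_forall fun s => ?_)
  simp only [← Real.exp_add]
  congr 1
  linarith [gauss_par a b s]

theorem gauss_const_pos : 0 < ∫ s : H, Real.exp (-4 * ‖s‖ ^ 2) := by
  refine integral_pos_of_integrable_nonneg_nonzero (x := 0) ?_ (gauss_integrable 4 (by norm_num)) ?_ ?_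
  · fun_prop
  · intro s; positivity
  · simp

variable {Ω : Type*} [TopologicalSpace Ω] [CompactSpace Ω] [SecondCountableTopology Ω]
  [MeasurableSpace Ω] [BorelSpace Ω] (μ : Measure Ω) [IsFiniteMeasure μ]

theorem exists_bd {E : Type*} [NormedAddCommGroup E] (F : Ω → E) (hF : Continuous F) :
    ∃ R : ℝ, 0 ≤ R ∧ ∀ x, ‖F x‖ ≤ R := by
  obtain ⟨R, hR⟩ := (isCompact_range hF).isBounded.exists_norm_le
  refine ⟨max R 0, le_max_right _ _, fun x => ?_⟩
  exact (hR _ (Set.mem_range_self x)).trans (le_max_left _ _)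

theorem gauss_le (a s : H) (R : ℝ) (ha : ‖a‖ ≤ R) :
    Real.exp (-2 * ‖a - s‖ ^ 2) ≤ Real.exp (2 * R ^ 2) * Real.exp (-1 * ‖s‖ ^ 2) := by
  rw [← Real.exp_add]
  apply Real.exp_le_exp.2
  have h1 : ‖s‖ ≤ ‖a‖ + ‖a - s‖ := by
    have := norm_sub_le a (a - s)
    simpa using this
  have h2 : ‖s‖ ^ 2 ≤ (R + ‖a - s‖) ^ 2 := by
    have := norm_nonneg s
    gcongr; linarith
  nlinarith [sq_nonneg (R - ‖a - s‖)]

theorem kern_integrable (F G : Ω → ℝ) (hF : Continuous F) (hG : Continuous G) (a b : Ω → H)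
    (ha : Continuous a) (hb : Continuous b) :
    Integrable (fun q : H × (Ω × Ω) => F q.2.1 * G q.2.2 *
      (Real.exp (-2 * ‖a q.2.1 - q.1‖ ^ 2) * Real.exp (-2 * ‖b q.2.2 - q.1‖ ^ 2)))
      ((volume : Measure H).prod (μ.prod μ)) := by
  obtain ⟨R, hR0, hR⟩ := exists_bd a ha
  obtain ⟨RF, hRF0, hRF⟩ := exists_bd F hF
  obtain ⟨RG, hRG0, hRG⟩ := exists_bd G hG
  have hi : Integrable (fun q : H × (Ω × Ω) => (RF * RG * Real.exp (2 * R ^ 2)) * Real.exp (-1 * ‖q.1‖ ^ 2))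
      ((volume : Measure H).prod (μ.prod μ)) :=
    ((gauss_integrable (H := H) 1 one_pos).comp_fst (μ.prod μ)).const_mul _
  refine hi.mono' ?_ ?_
  · apply Continuous.aestronglyMeasurable
    fun_prop
  · refine Filter.Eventually.of_forall fun q => ?_
    rw [norm_mul, norm_mul, norm_mul, Real.norm_eq_abs (Real.exp _), Real.norm_eq_abs (Real.exp _),
      Real.abs_exp, Real.abs_exp]
    have h1 := hRF q.2.1
    have h2 := hRG q.2.2
    have h3 := gauss_le (a q.2.1) q.1 R (hR _)
    have h4 : Real.exp (-2 * ‖b q.2.2 - q.1‖ ^ 2) ≤ 1 := by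
      apply Real.exp_le_one_iff.2
      nlinarith [sq_nonneg ‖b q.2.2 - q.1‖]
    calc _ ≤ (RF * RG) * ((Real.exp (2 * R ^ 2) * Real.exp (-1 * ‖q.1‖ ^ 2)) * 1) := by gcongr
      _ = _ := by ring

theorem kern_eq (F G : Ω → ℝ) (hF : Continuous F) (hG : Continuous G) (a b : Ω → H)
    (ha : Continuous a) (hb : Continuous b) :
    Integrable (fun s : H => (∫ x, F x * Real.exp (-2 * ‖a x - s‖ ^ 2) ∂μ) *
        (∫ y, G y * Real.exp (-2 * ‖b y - s‖ ^ 2) ∂μ)) ∧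
    ∫ s : H, (∫ x, F x * Real.exp (-2 * ‖a x - s‖ ^ 2) ∂μ) *
        (∫ y, G y * Real.exp (-2 * ‖b y - s‖ ^ 2) ∂μ)
      = (∫ s : H, Real.exp (-4 * ‖s‖ ^ 2)) *
        ∫ q : Ω × Ω, F q.1 * G q.2 * Real.exp (-‖a q.1 - b q.2‖ ^ 2) ∂(μ.prod μ) := by
  have hk := kern_integrable μ F G hF hG a b ha hb
  have e : ∀ s : H, (∫ x, F x * Real.exp (-2 * ‖a x - s‖ ^ 2) ∂μ) *
        (∫ y, G y * Real.exp (-2 * ‖b y - s‖ ^ 2) ∂μ) = ∫ q : Ω × Ω, F q.1 * G q.2 *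
      (Real.exp (-2 * ‖a q.1 - s‖ ^ 2) * Real.exp (-2 * ‖b q.2 - s‖ ^ 2)) ∂(μ.prod μ) := by
    intro s
    rw [← integral_prod_mul]
    congr 1
    ext q
    ring
  simp only [e]
  refine ⟨hk.integral_prod_left, ?_⟩
  rw [integral_integral_swap hk, ← integral_const_mul]
  congr 1
  ext q
  rw [integral_const_mul, gauss_conv]
  ring

end kernel

theorem gauss_cs {H : Type*} [NormedAddCommGroup H] [InnerProductSpace ℝ H] [FiniteDimensional ℝ H]
    {Ω : Type*} [TopologicalSpace Ω] [CompactSpace Ω] [SecondCountableTopology Ω]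
    [MeasurableSpace Ω] [BorelSpace Ω] (μ : Measure Ω) [IsFiniteMeasure μ]
    (F G : Ω → ℝ) (hF : Continuous F) (hG : Continuous G) (a b : Ω → H)
    (ha : Continuous a) (hb : Continuous b) :
    (∫ q : Ω × Ω, F q.1 * G q.2 * Real.exp (-‖a q.1 - b q.2‖ ^ 2) ∂(μ.prod μ)) ^ 2 ≤
    (∫ q : Ω × Ω, F q.1 * F q.2 * Real.exp (-‖a q.1 - a q.2‖ ^ 2) ∂(μ.prod μ)) *
    (∫ q : Ω × Ω, G q.1 * G q.2 * Real.exp (-‖b q.1 - b q.2‖ ^ 2) ∂(μ.prod μ)) := by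
  let _ : MeasurableSpace H := borel H
  have _ : BorelSpace H := ⟨rfl⟩
  obtain ⟨i1, e1⟩ := kern_eq μ F G hF hG a b ha hb
  obtain ⟨i2, e2⟩ := kern_eq μ F F hF hF a a ha ha
  obtain ⟨i3, e3⟩ := kern_eq μ G G hG hG b b hb hb
  have hc := gauss_const_pos (H := H)
  set c := ∫ s : H, Real.exp (-4 * ‖s‖ ^ 2)
  set I1 := ∫ q : Ω × Ω, F q.1 * G q.2 * Real.exp (-‖a q.1 - b q.2‖ ^ 2) ∂(μ.prod μ)
  set I2 := ∫ q : Ω × Ω, F q.1 * F q.2 * Real.exp (-‖a q.1 - a q.2‖ ^ 2) ∂(μ.prod μ)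
  set I3 := ∫ q : Ω × Ω, G q.1 * G q.2 * Real.exp (-‖b q.1 - b q.2‖ ^ 2) ∂(μ.prod μ)
  set A : H → ℝ := fun s => ∫ x, F x * Real.exp (-2 * ‖a x - s‖ ^ 2) ∂μ
  set B : H → ℝ := fun s => ∫ x, G x * Real.exp (-2 * ‖b x - s‖ ^ 2) ∂μ
  have key : ∀ t : ℝ, 0 ≤ (c * I3) * (t * t) + (2 * (c * I1)) * t + c * I2 := by
    intro t
    rw [← e1, ← e2, ← e3]
    have : (∫ s, B s * B s) * (t * t) + (2 * ∫ s, A s * B s) * t + ∫ s, A s * A s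
        = ∫ s, (A s + t * B s) * (A s + t * B s) := by
      have h : ∀ s, (A s + t * B s) * (A s + t * B s)
        = (t * t) * (B s * B s) + (2 * t) * (A s * B s) + A s * A s := fun s => by ring
      simp only [h]
      have j1 : Integrable (fun s => (2 * t) * (A s * B s)) := i1.const_mul _
      have j2 : Integrable (fun s => A s * A s) := i2
      have j3 : Integrable (fun s => (t * t) * (B s * B s)) := i3.const_mul _
      have j4 : Integrable (fun s => (t * t) * (B s * B s) + (2 * t) * (A s * B s)) := j3.add j1
      rw [integral_add j4 j2, integral_add j3 j1, integral_const_mul, integral_const_mul]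
      ring
    rw [this]
    exact integral_nonneg fun s => mul_self_nonneg _
  have hd := discrim_le_zero key
  unfold discrim at hd
  have : c ^ 2 * (I1 ^ 2) ≤ c ^ 2 * (I2 * I3) := by nlinarith
  exact le_of_mul_le_mul_left this (by positivity)

end SpinRP

namespace SpinRP

set_option linter.unusedSectionVars false

section dom
variable {E : Type*} [NormedAddCommGroup E] [InnerProductSpace ℝ E] [FiniteDimensional ℝ E]
variable {X : Type*} [TopologicalSpace X] [CompactSpace X] [SecondCountableTopology X]
  [MeasurableSpace X] [BorelSpace X] (μ : Measure X) [IsProbabilityMeasure μ]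
variable {V : Type*} [Fintype V]

/-- Quadratic action with an external field on ordered pairs. -/
noncomputable def act (ι : X → E) (w : V → V → ℝ) (h : V → V → E) (φ : V → X) : ℝ :=
  ∑ x, ∑ y, w x y * ‖ι (φ y) - ι (φ x) - h x y‖ ^ 2

/-- Partition function with an external field on ordered pairs. -/
noncomputable def part (ι : X → E) (w : V → V → ℝ) (h : V → V → E) : ℝ :=
  ∫ φ : V → X, Real.exp (-act ι w h φ) ∂(Measure.pi fun _ => μ)

/-- A reflection: an identification of the vertex set with two copies of a half,
such that the weights are reflection symmetric and only pairs of mirror images cross. -/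
structure Refl (w : V → V → ℝ) (P : Type) [Fintype P] where
  e : P ⊕ P ≃ V
  same : ∀ p q, w (e (.inl p)) (e (.inl q)) = w (e (.inr p)) (e (.inr q))
  cross : ∀ p q, w (e (.inl p)) (e (.inr q)) = w (e (.inr p)) (e (.inl q))
  diag : ∀ p q, p ≠ q → w (e (.inl p)) (e (.inr q)) = 0

/-- Symmetrised field on two copies of the half. -/
def symS {P : Type} (g : P → P → E) : P ⊕ P → P ⊕ P → E
  | .inl p, .inl q => g p q
  | .inr p, .inr q => g p q
  | _, _ => 0

/-- Symmetrised field. -/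
def symF {P : Type} (e : P ⊕ P ≃ V) (g : P → P → E) (x y : V) : E :=
  symS g (e.symm x) (e.symm y)

/-- Glue two half configurations. -/
def glue {P : Type} (e : P ⊕ P ≃ V) (q : (P → X) × (P → X)) (x : V) : X :=
  Sum.elim q.1 q.2 (e.symm x)

theorem integral_glue {P : Type} [Fintype P] (e : P ⊕ P ≃ V) (f : (V → X) → ℝ) :
    ∫ φ, f φ ∂(Measure.pi fun _ : V => μ) =
      ∫ q, f (glue e q) ∂((Measure.pi fun _ : P => μ).prod (Measure.pi fun _ : P => μ)) := by
  have h1 := (measurePreserving_sumPiEquivProdPi_symm (fun _ : P ⊕ P => μ))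
  have h2 := measurePreserving_piCongrLeft (fun _ : V => μ) e
  have h3 := h2.comp h1
  have := h3.integral_comp
    (((MeasurableEquiv.sumPiEquivProdPi (fun _ : P ⊕ P => X)).symm.trans
      (MeasurableEquiv.piCongrLeft (fun _ : V => X) e)).measurableEmbedding) f
  rw [← this]
  congr 1
  ext q
  congr 1
  ext x
  obtain ⟨y, rfl⟩ := e.surjective x
  simp only [glue, Function.comp, Equiv.symm_apply_apply]
  rw [MeasurableEquiv.coe_piCongrLeft, Equiv.piCongrLeft_apply_apply]
  cases y <;> rfl

theorem act_glue {P : Type} [Fintype P] (ι : X → E) (w : V → V → ℝ) (ρ : Refl w P)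
    (h : V → V → E) (q : (P → X) × (P → X)) :
    act ι w h (glue ρ.e q) =
      act ι (fun a b => w (ρ.e (.inl a)) (ρ.e (.inl b)))
        (fun a b => h (ρ.e (.inl a)) (ρ.e (.inl b))) q.1 +
      act ι (fun a b => w (ρ.e (.inl a)) (ρ.e (.inl b)))
        (fun a b => h (ρ.e (.inr a)) (ρ.e (.inr b))) q.2 +
      ∑ p, w (ρ.e (.inl p)) (ρ.e (.inr p)) *
        (‖ι (q.2 p) - ι (q.1 p) - h (ρ.e (.inl p)) (ρ.e (.inr p))‖ ^ 2 +
         ‖ι (q.1 p) - ι (q.2 p) - h (ρ.e (.inr p)) (ρ.e (.inl p))‖ ^ 2) := by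
  unfold act
  rw [← ρ.e.sum_comp]
  simp_rw [← ρ.e.sum_comp (fun y => w _ y * ‖_ - _ - h _ y‖ ^ 2)]
  simp only [Fintype.sum_sum_type, glue, Equiv.symm_apply_apply, Sum.elim_inl, Sum.elim_inr]
  have d1 : ∀ p, ∑ b, w (ρ.e (.inl p)) (ρ.e (.inr b)) *
      ‖ι (q.2 b) - ι (q.1 p) - h (ρ.e (.inl p)) (ρ.e (.inr b))‖ ^ 2 =
      w (ρ.e (.inl p)) (ρ.e (.inr p)) *
      ‖ι (q.2 p) - ι (q.1 p) - h (ρ.e (.inl p)) (ρ.e (.inr p))‖ ^ 2 := by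
    intro p
    refine Finset.sum_eq_single p (fun b _ hb => ?_) (fun hh => absurd (Finset.mem_univ p) hh)
    rw [ρ.diag p b hb.symm, zero_mul]
  have d2 : ∀ p, ∑ b, w (ρ.e (.inr p)) (ρ.e (.inl b)) *
      ‖ι (q.1 b) - ι (q.2 p) - h (ρ.e (.inr p)) (ρ.e (.inl b))‖ ^ 2 =
      w (ρ.e (.inl p)) (ρ.e (.inr p)) *
      ‖ι (q.1 p) - ι (q.2 p) - h (ρ.e (.inr p)) (ρ.e (.inl p))‖ ^ 2 := by
    intro p
    rw [ρ.cross p p]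
    refine Finset.sum_eq_single p (fun b _ hb => ?_) (fun hh => absurd (Finset.mem_univ p) hh)
    rw [← ρ.cross p b, ρ.diag p b hb.symm, zero_mul]
  simp only [Finset.sum_add_distrib, d1, d2, mul_add, ρ.same]
  ring

theorem act_cont (ι : X → E) (hι : Continuous ι) (w : V → V → ℝ) :
    Continuous (fun p : (V → V → E) × (V → X) => act ι w p.1 p.2) := by
  unfold act
  fun_prop

theorem rp_ineq {P : Type} [Fintype P] (ι : X → E) (hι : Continuous ι) (w : V → V → ℝ)
    (hw : ∀ x y, 0 ≤ w x y) (ρ : Refl w P) (h : V → V → E) :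
    (part μ ι w h) ^ 2 ≤
      part μ ι w (symF ρ.e fun a b => h (ρ.e (.inl a)) (ρ.e (.inl b))) *
      part μ ι w (symF ρ.e fun a b => h (ρ.e (.inr a)) (ρ.e (.inr b))) := by
  classical
  let c : P → ℝ := fun p => Real.sqrt (w (ρ.e (.inl p)) (ρ.e (.inr p)))
  have hc : ∀ p, c p ^ 2 = w (ρ.e (.inl p)) (ρ.e (.inr p)) := fun p => Real.sq_sqrt (hw _ _)
  let a : (P → X) → PiLp 2 (fun _ : P × Bool => E) := fun φ => WithLp.toLp 2 fun t =>
    c t.1 • (ι (φ t.1) + if t.2 then h (ρ.e (.inl t.1)) (ρ.e (.inr t.1)) else 0)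
  let b : (P → X) → PiLp 2 (fun _ : P × Bool => E) := fun φ => WithLp.toLp 2 fun t =>
    c t.1 • (ι (φ t.1) + if t.2 then 0 else h (ρ.e (.inr t.1)) (ρ.e (.inl t.1)))
  let F : (P → X) → ℝ := fun φ => Real.exp (-act ι (fun a b => w (ρ.e (.inl a)) (ρ.e (.inl b)))
        (fun a b => h (ρ.e (.inl a)) (ρ.e (.inl b))) φ)
  let G : (P → X) → ℝ := fun φ => Real.exp (-act ι (fun a b => w (ρ.e (.inl a)) (ρ.e (.inl b)))
        (fun a b => h (ρ.e (.inr a)) (ρ.e (.inr b))) φ)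
  have ha : Continuous a := by
    refine (PiLp.continuous_toLp 2 _).comp ?_
    fun_prop
  have hb : Continuous b := by
    refine (PiLp.continuous_toLp 2 _).comp ?_
    fun_prop
  have hF : Continuous F := by
    have := (act_cont ι hι (fun a b : P => w (ρ.e (.inl a)) (ρ.e (.inl b)))).comp
      (Continuous.prodMk_right (fun a b => h (ρ.e (.inl a)) (ρ.e (.inl b))))
    exact Real.continuous_exp.comp this.neg
  have hG : Continuous G := by
    have := (act_cont ι hι (fun a b : P => w (ρ.e (.inl a)) (ρ.e (.inl b)))).comp
      (Continuous.prodMk_right (fun a b => h (ρ.e (.inr a)) (ρ.e (.inr b))))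
    exact Real.continuous_exp.comp this.neg
  have main := gauss_cs (Measure.pi fun _ : P => μ) F G hF hG a b ha hb
  have e1 : ∀ q : (P → X) × (P → X), Real.exp (-act ι w h (glue ρ.e q)) =
      F q.1 * G q.2 * Real.exp (-‖a q.1 - b q.2‖ ^ 2) := by
    intro q
    simp only [F, G, ← Real.exp_add]
    congr 1
    rw [act_glue, PiLp.norm_sq_eq_of_L2, Fintype.sum_prod_type]
    simp only [a, b, Fintype.sum_bool, PiLp.sub_apply, ← smul_sub, norm_smul, mul_pow,
      Real.norm_eq_abs, sq_abs, hc, mul_add]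
    simp
    have t1 : ∀ p, ‖ι (q.1 p) + h (ρ.e (Sum.inl p)) (ρ.e (Sum.inr p)) - ι (q.2 p)‖ =
      ‖ι (q.2 p) - ι (q.1 p) - h (ρ.e (Sum.inl p)) (ρ.e (Sum.inr p))‖ := fun p => by
        rw [← norm_neg]; congr 1; abel
    have t2 : ∀ p, ‖ι (q.1 p) - (ι (q.2 p) + h (ρ.e (Sum.inr p)) (ρ.e (Sum.inl p)))‖ =
      ‖ι (q.1 p) - ι (q.2 p) - h (ρ.e (Sum.inr p)) (ρ.e (Sum.inl p))‖ := fun p => by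
        congr 1; abel
    simp only [t1, t2]
    ring
  have e2 : ∀ q : (P → X) × (P → X), Real.exp (-act ι w
      (symF ρ.e fun a b => h (ρ.e (.inl a)) (ρ.e (.inl b))) (glue ρ.e q)) =
      F q.1 * F q.2 * Real.exp (-‖a q.1 - a q.2‖ ^ 2) := by
    intro q
    simp only [F, ← Real.exp_add]
    congr 1
    rw [act_glue, PiLp.norm_sq_eq_of_L2, Fintype.sum_prod_type]
    simp only [a, Fintype.sum_bool, PiLp.sub_apply, ← smul_sub, norm_smul, mul_pow,
      Real.norm_eq_abs, sq_abs, hc, mul_add, symF, Equiv.symm_apply_apply, symS]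
    have t1 : ∀ p, ‖ι (q.2 p) - ι (q.1 p)‖ = ‖ι (q.1 p) - ι (q.2 p)‖ := fun p => norm_sub_rev _ _
    simp [t1]
    ring
  have e3 : ∀ q : (P → X) × (P → X), Real.exp (-act ι w
      (symF ρ.e fun a b => h (ρ.e (.inr a)) (ρ.e (.inr b))) (glue ρ.e q)) =
      G q.1 * G q.2 * Real.exp (-‖b q.1 - b q.2‖ ^ 2) := by
    intro q
    simp only [G, ← Real.exp_add]
    congr 1
    rw [act_glue, PiLp.norm_sq_eq_of_L2, Fintype.sum_prod_type]
    simp only [b, Fintype.sum_bool, PiLp.sub_apply, ← smul_sub, norm_smul, mul_pow,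
      Real.norm_eq_abs, sq_abs, hc, mul_add, symF, Equiv.symm_apply_apply, symS]
    have t1 : ∀ p, ‖ι (q.2 p) - ι (q.1 p)‖ = ‖ι (q.1 p) - ι (q.2 p)‖ := fun p => norm_sub_rev _ _
    simp [t1]
    ring
  unfold part
  rw [integral_glue μ ρ.e, integral_glue μ ρ.e, integral_glue μ ρ.e]
  simp only [e1, e2, e3]
  exact main

/-- Squared norm of a field. -/
noncomputable def nsq (h : V → V → E) : ℝ := ∑ x, ∑ y, ‖h x y‖ ^ 2

theorem nsq_sym {P : Type} [Fintype P] (e : P ⊕ P ≃ V) (h : V → V → E) :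
    nsq (symF e fun a b => h (e (.inl a)) (e (.inl b))) +
      nsq (symF e fun a b => h (e (.inr a)) (e (.inr b))) +
      2 * ∑ p, (‖h (e (.inl p)) (e (.inr p))‖ ^ 2 + ‖h (e (.inr p)) (e (.inl p))‖ ^ 2)
      ≤ 2 * nsq h := by
  have key : ∀ g : V → V → E, nsq g = ∑ a : P ⊕ P, ∑ b : P ⊕ P, ‖g (e a) (e b)‖ ^ 2 := by
    intro g
    unfold nsq
    rw [← e.sum_comp]
    simp_rw [← e.sum_comp (fun y => ‖g _ y‖ ^ 2)]
  have c1 : ∑ p, ‖h (e (.inl p)) (e (.inr p))‖ ^ 2 ≤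
      ∑ p, ∑ q, ‖h (e (.inl p)) (e (.inr q))‖ ^ 2 :=
    Finset.sum_le_sum fun p _ => Finset.single_le_sum
      (f := fun q => ‖h (e (.inl p)) (e (.inr q))‖ ^ 2) (fun _ _ => by positivity) (Finset.mem_univ p)
  have c2 : ∑ p, ‖h (e (.inr p)) (e (.inl p))‖ ^ 2 ≤
      ∑ p, ∑ q, ‖h (e (.inr p)) (e (.inl q))‖ ^ 2 :=
    Finset.sum_le_sum fun p _ => Finset.single_le_sum
      (f := fun q => ‖h (e (.inr p)) (e (.inl q))‖ ^ 2) (fun _ _ => by positivity) (Finset.mem_univ p)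
  simp only [key, Fintype.sum_sum_type, symF, Equiv.symm_apply_apply, symS, Finset.sum_add_distrib]
  simp
  linarith

theorem part_cont (ι : X → E) (hι : Continuous ι) (w : V → V → ℝ) :
    Continuous (fun h : V → V → E => part μ ι w h) := by
  unfold part
  have := continuous_parametric_integral_of_continuous (μ := Measure.pi fun _ : V => μ)
    (f := fun (h : V → V → E) (φ : V → X) => Real.exp (-act ι w h φ))
    (Real.continuous_exp.comp (act_cont ι hι w).neg) (s := Set.univ) isCompact_univ
  simpa using this

theorem act_integrable (ι : X → E) (hι : Continuous ι) (w : V → V → ℝ) (h : V → V → E) :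
    Integrable (fun φ : V → X => Real.exp (-act ι w h φ)) (Measure.pi fun _ => μ) := by
  have : Continuous (fun φ : V → X => Real.exp (-act ι w h φ)) :=
    Real.continuous_exp.comp ((act_cont ι hι w).comp (Continuous.prodMk_right h)).neg
  exact this.integrable_of_hasCompactSupport (HasCompactSupport.of_compactSpace _)

theorem part_pos (ι : X → E) (hι : Continuous ι) (w : V → V → ℝ) (h : V → V → E) :
    0 < part μ ι w h :=
  integral_exp_pos (act_integrable μ ι hι w h)

theorem part_le_one (ι : X → E) (w : V → V → ℝ) (hw : ∀ x y, 0 ≤ w x y) (h : V → V → E) :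
    part μ ι w h ≤ 1 := by
  unfold part
  calc _ ≤ ∫ φ : V → X, (1:ℝ) ∂(Measure.pi fun _ => μ) := by
        refine integral_mono_of_nonneg (Filter.Eventually.of_forall fun _ => by positivity)
          (integrable_const _) (Filter.Eventually.of_forall fun φ => ?_)
        refine Real.exp_le_one_iff.2 (neg_nonpos.2 ?_)
        exact Finset.sum_nonneg fun x _ => Finset.sum_nonneg fun y _ => mul_nonneg (hw x y) (by positivity)
    _ = 1 := by simp

theorem gaussian_domination (ι : X → E) (hι : Continuous ι) (w : V → V → ℝ)
    (hw : ∀ x y, 0 ≤ w x y)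
    (hR : ∀ x y, w x y ≠ 0 → ∃ (P : Type) (_ : Fintype P) (ρ : Refl w P) (p : P),
      (x = ρ.e (.inl p) ∧ y = ρ.e (.inr p)) ∨ (x = ρ.e (.inr p) ∧ y = ρ.e (.inl p)))
    (δ : ℝ) (hδ : 0 < δ) (h : V → V → E) :
    part μ ι w h ≤ part μ ι w 0 * Real.exp (δ * nsq h) := by
  let W : (V → V → E) → ℝ := fun h => part μ ι w h * Real.exp (-δ * nsq h)
  have hWc : Continuous W := by
    refine (part_cont μ ι hι w).mul (Real.continuous_exp.comp (continuous_const.mul ?_))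
    unfold nsq
    fun_prop
  have hz := part_pos μ ι hι w 0
  have hn0 : nsq (0 : V → V → E) = 0 := by simp [nsq]
  have hle : ∀ h : V → V → E, ‖h‖ ^ 2 ≤ nsq h := by
    intro h
    have h0 : 0 ≤ nsq h := Finset.sum_nonneg fun x _ => Finset.sum_nonneg fun y _ => by positivity
    have : ‖h‖ ≤ Real.sqrt (nsq h) := by
      refine (pi_norm_le_iff_of_nonneg (Real.sqrt_nonneg _)).2 fun x =>
        (pi_norm_le_iff_of_nonneg (Real.sqrt_nonneg _)).2 fun y => ?_
      apply Real.le_sqrt_of_sq_le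
      refine le_trans (Finset.single_le_sum (f := fun y => ‖h x y‖ ^ 2)
        (fun _ _ => by positivity) (Finset.mem_univ y)) ?_
      exact Finset.single_le_sum (f := fun x => ∑ y, ‖h x y‖ ^ 2)
        (fun _ _ => Finset.sum_nonneg fun y _ => by positivity) (Finset.mem_univ x)
    calc ‖h‖ ^ 2 ≤ (Real.sqrt (nsq h)) ^ 2 := by gcongr
      _ = _ := Real.sq_sqrt h0
  have hlim : Filter.Tendsto (fun h : V → V → E => Real.exp (-δ * ‖h‖ ^ 2))
      (Filter.cocompact _) (nhds 0) := by
    refine Real.tendsto_exp_atBot.comp ?_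
    refine Filter.Tendsto.const_mul_atTop_of_neg (by linarith) ?_
    exact (Filter.tendsto_pow_atTop two_ne_zero).comp tendsto_norm_cocompact_atTop
  obtain ⟨m, hm⟩ := hWc.exists_forall_ge' 0 (by
    filter_upwards [hlim.eventually (gt_mem_nhds hz)] with h hh
    have h1 := part_le_one μ ι w hw h
    have h2 := part_pos μ ι hι w h
    calc W h ≤ 1 * Real.exp (-δ * ‖h‖ ^ 2) := by
          simp only [W]
          refine mul_le_mul h1 (Real.exp_le_exp.2 ?_) (Real.exp_pos _).le zero_le_one
          nlinarith [hle h]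
      _ ≤ part μ ι w 0 := by linarith
      _ = W 0 := by simp [W, hn0])
  have hWp : ∀ h, 0 < W h := fun h => mul_pos (part_pos μ ι hι w h) (Real.exp_pos _)
  have hm0 : ∀ x y, w x y ≠ 0 → m x y = 0 := by
    intro x y hxy
    obtain ⟨P, _, ρ, p, hp⟩ := hR x y hxy
    have h1 := rp_ineq μ ι hι w hw ρ m
    have h2 := nsq_sym ρ.e m
    have h3 := hm (symF ρ.e fun a b => m (ρ.e (.inl a)) (ρ.e (.inl b)))
    have h4 := hm (symF ρ.e fun a b => m (ρ.e (.inr a)) (ρ.e (.inr b)))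
    have h5 := hWp (symF ρ.e fun a b => m (ρ.e (.inl a)) (ρ.e (.inl b)))
    have h6 := hWp (symF ρ.e fun a b => m (ρ.e (.inr a)) (ρ.e (.inr b)))
    set mL := (symF ρ.e fun a b => m (ρ.e (.inl a)) (ρ.e (.inl b)))
    set mR := (symF ρ.e fun a b => m (ρ.e (.inr a)) (ρ.e (.inr b)))
    have h7 : ‖m x y‖ ^ 2 ≤
        ∑ p, (‖m (ρ.e (.inl p)) (ρ.e (.inr p))‖ ^ 2 + ‖m (ρ.e (.inr p)) (ρ.e (.inl p))‖ ^ 2) := by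
      refine le_trans ?_ (Finset.single_le_sum (f := fun p => (‖m (ρ.e (.inl p)) (ρ.e (.inr p))‖ ^ 2
        + ‖m (ρ.e (.inr p)) (ρ.e (.inl p))‖ ^ 2)) (fun _ _ => by positivity) (Finset.mem_univ p))
      rcases hp with ⟨rfl, rfl⟩ | ⟨rfl, rfl⟩
      · simp
      · simp
    have h8 : part μ ι w m = W m * Real.exp (δ * nsq m) := by
      simp only [W]; rw [mul_assoc, ← Real.exp_add]; simp
    have h9 : part μ ι w mL = W mL * Real.exp (δ * nsq mL) := by
      simp only [W]; rw [mul_assoc, ← Real.exp_add]; simp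
    have h10 : part μ ι w mR = W mR * Real.exp (δ * nsq mR) := by
      simp only [W]; rw [mul_assoc, ← Real.exp_add]; simp
    have h11 : W m ^ 2 * Real.exp (2 * (δ * nsq m)) ≤
        W m ^ 2 * Real.exp (δ * nsq mL + δ * nsq mR) := by
      calc W m ^ 2 * Real.exp (2 * (δ * nsq m)) = part μ ι w m ^ 2 := by
            rw [h8, two_mul, Real.exp_add]; ring
        _ ≤ part μ ι w mL * part μ ι w mR := h1
        _ = (W mL * W mR) * Real.exp (δ * nsq mL + δ * nsq mR) := by
            rw [h9, h10, Real.exp_add]; ring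
        _ ≤ _ := by
            rw [sq (W m)]
            have := hWp m
            gcongr
    have h12 := Real.exp_le_exp.1 (le_of_mul_le_mul_left h11 (pow_pos (hWp m) 2))
    have h13 : ‖m x y‖ ^ 2 ≤ 0 := by
      have : δ * ‖m x y‖ ^ 2 ≤ 0 := by nlinarith
      by_contra hc
      push Not at hc
      nlinarith [mul_pos hδ hc]
    have : ‖m x y‖ = 0 := by nlinarith [norm_nonneg (m x y)]
    simpa using this
  have hpm : part μ ι w m = part μ ι w 0 := by
    unfold part act
    congr 1
    ext φ
    congr 2
    refine Finset.sum_congr rfl fun x _ => Finset.sum_congr rfl fun y _ => ?_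
    by_cases hxy : w x y = 0
    · simp [hxy]
    · simp [hm0 x y hxy]
  have hnm : 0 ≤ nsq m := le_trans (by positivity) (hle m)
  have h8 : part μ ι w h = W h * Real.exp (δ * nsq h) := by
      simp only [W]; rw [mul_assoc, ← Real.exp_add]; simp
  rw [h8]
  have : W m ≤ part μ ι w 0 := by
    simp only [W, hpm]
    refine mul_le_of_le_one_right hz.le (Real.exp_le_one_iff.2 ?_)
    nlinarith
  have := (hm h).trans this
  gcongr

end dom
end SpinRP

namespace SpinRP

set_option linter.unusedSectionVars false

section var
variable {E : Type*} [NormedAddCommGroup E] [InnerProductSpace ℝ E] [FiniteDimensional ℝ E]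
variable {X : Type*} [TopologicalSpace X] [CompactSpace X] [SecondCountableTopology X]
  [MeasurableSpace X] [BorelSpace X] (μ : Measure X) [IsProbabilityMeasure μ]
variable {V : Type*} [Fintype V]

theorem one_add_sq_le_cosh (t : ℝ) : 1 + t ^ 2 / 2 ≤ Real.cosh t := by
  have h1 : Real.cosh t = 1 + 2 * Real.sinh (t / 2) ^ 2 := by
    have h2 := Real.cosh_two_mul (t / 2)
    have h3 := Real.cosh_sq (t / 2)
    rw [show 2 * (t / 2) = t by ring] at h2
    linarith
  have h4 : (t / 2) ^ 2 ≤ Real.sinh (t / 2) ^ 2 := by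
    rcases le_total 0 (t / 2) with h | h
    · have := Real.self_le_sinh_iff.2 h
      gcongr
    · have := Real.sinh_le_self_iff.2 h
      nlinarith
  linarith

/-- Linear observable. -/
noncomputable def lin (ι : X → E) (w : V → V → ℝ) (h : V → V → E) (φ : V → X) : ℝ :=
  ∑ x, ∑ y, w x y * ⟪ι (φ y) - ι (φ x), h x y⟫

theorem act_expand (ι : X → E) (w : V → V → ℝ) (h : V → V → E) (φ : V → X) :
    act ι w h φ = act ι w 0 φ - 2 * lin ι w h φ + ∑ x, ∑ y, w x y * ‖h x y‖ ^ 2 := by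
  simp only [act, lin, Finset.mul_sum, ← Finset.sum_sub_distrib, ← Finset.sum_add_distrib]
  refine Finset.sum_congr rfl fun x _ => Finset.sum_congr rfl fun y _ => ?_
  rw [norm_sub_sq_real]
  simp
  ring

theorem lin_cont (ι : X → E) (hι : Continuous ι) (w : V → V → ℝ) (h : V → V → E) :
    Continuous (fun φ : V → X => lin ι w h φ) := by
  unfold lin
  refine continuous_finsetSum _ fun x _ => continuous_finsetSum _ fun y _ => ?_
  have h1 : Continuous fun φ : V → X => ι (φ y) - ι (φ x) :=
    (hι.comp (continuous_apply y)).sub (hι.comp (continuous_apply x))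
  exact continuous_const.mul (h1.inner continuous_const)

theorem act_cont' (ι : X → E) (hι : Continuous ι) (w : V → V → ℝ) (h : V → V → E) :
    Continuous (fun φ : V → X => act ι w h φ) := by
  unfold act
  fun_prop

theorem cint (f : (V → X) → ℝ) (hf : Continuous f) :
    Integrable f (Measure.pi fun _ : V => μ) :=
  hf.integrable_of_hasCompactSupport (HasCompactSupport.of_compactSpace _)

theorem exp_bound (ι : X → E) (hι : Continuous ι) (w : V → V → ℝ)
    (hw : ∀ x y, 0 ≤ w x y)
    (hR : ∀ x y, w x y ≠ 0 → ∃ (P : Type) (_ : Fintype P) (ρ : Refl w P) (p : P),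
      (x = ρ.e (.inl p) ∧ y = ρ.e (.inr p)) ∨ (x = ρ.e (.inr p) ∧ y = ρ.e (.inl p)))
    (γ : ℝ) (hγ : 0 < γ) (hwγ : ∀ x y, w x y ≤ γ) (h : V → V → E) :
    ∫ φ, Real.exp (-act ι w 0 φ) * Real.exp (2 * lin ι w h φ) ∂(Measure.pi fun _ : V => μ)
      ≤ part μ ι w 0 * Real.exp (2 * γ * nsq h) := by
  have h1 := gaussian_domination μ ι hι w hw hR γ hγ h
  have h2 : ∑ x, ∑ y, w x y * ‖h x y‖ ^ 2 ≤ γ * nsq h := by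
    unfold nsq
    simp only [Finset.mul_sum]
    gcongr with x _ y _
    exact hwγ x y
  set T := ∑ x, ∑ y, w x y * ‖h x y‖ ^ 2
  have h3 : ∫ φ, Real.exp (-act ι w 0 φ) * Real.exp (2 * lin ι w h φ) ∂(Measure.pi fun _ : V => μ)
      = Real.exp T * part μ ι w h := by
    unfold part
    rw [← integral_const_mul]
    congr 1
    ext φ
    rw [← Real.exp_add, ← Real.exp_add, act_expand ι w h φ]
    congr 1
    simp only [T]
    ring
  rw [h3]
  calc _ ≤ Real.exp (γ * nsq h) * (part μ ι w 0 * Real.exp (γ * nsq h)) := by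
        have := part_pos μ ι hι w h
        gcongr
    _ = _ := by
      rw [show 2 * γ * nsq h = γ * nsq h + γ * nsq h by ring, Real.exp_add]; ring

theorem var_bound0 (ι : X → E) (hι : Continuous ι) (w : V → V → ℝ)
    (hw : ∀ x y, 0 ≤ w x y)
    (hR : ∀ x y, w x y ≠ 0 → ∃ (P : Type) (_ : Fintype P) (ρ : Refl w P) (p : P),
      (x = ρ.e (.inl p) ∧ y = ρ.e (.inr p)) ∨ (x = ρ.e (.inr p) ∧ y = ρ.e (.inl p)))
    (γ : ℝ) (hγ : 0 < γ) (hwγ : ∀ x y, w x y ≤ γ) (h : V → V → E) :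
    2 * ∫ φ, Real.exp (-act ι w 0 φ) * (lin ι w h φ) ^ 2 ∂(Measure.pi fun _ : V => μ)
      ≤ part μ ι w 0 * (Real.exp (2 * γ * nsq h) - 1) := by
  have h1 := exp_bound μ ι hι w hw hR γ hγ hwγ h
  have h2 := exp_bound μ ι hι w hw hR γ hγ hwγ (-h)
  have hn : nsq (-h) = nsq h := by simp [nsq]
  have hl : ∀ φ, lin ι w (-h) φ = -lin ι w h φ := by intro φ; simp [lin]
  rw [hn] at h2
  simp only [hl] at h2
  have ca := act_cont' ι hι w (0 : V → V → E)
  have cl := lin_cont ι hι w h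
  have key : ∫ φ, (2 * Real.exp (-act ι w 0 φ) + 4 * (Real.exp (-act ι w 0 φ) * (lin ι w h φ) ^ 2))
        ∂(Measure.pi fun _ : V => μ) ≤
      ∫ φ, (Real.exp (-act ι w 0 φ) * Real.exp (2 * lin ι w h φ) +
        Real.exp (-act ι w 0 φ) * Real.exp (2 * -lin ι w h φ)) ∂(Measure.pi fun _ : V => μ) := by
    refine integral_mono (cint μ _ (by fun_prop)) (cint μ _ (by fun_prop)) fun φ => ?_
    have := one_add_sq_le_cosh (2 * lin ι w h φ)
    rw [Real.cosh_eq] at this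
    have hp := Real.exp_pos (-act ι w 0 φ)
    have e : 2 * -lin ι w h φ = -(2 * lin ι w h φ) := by ring
    simp only [e]
    nlinarith
  rw [integral_add (cint μ _ (by fun_prop)) (cint μ _ (by fun_prop)),
    integral_add (cint μ _ (by fun_prop)) (cint μ _ (by fun_prop)),
    integral_const_mul, integral_const_mul] at key
  change 2 * part μ ι w 0 + _ ≤ _ at key
  linarith

theorem var_bound (ι : X → E) (hι : Continuous ι) (w : V → V → ℝ)
    (hw : ∀ x y, 0 ≤ w x y)
    (hR : ∀ x y, w x y ≠ 0 → ∃ (P : Type) (_ : Fintype P) (ρ : Refl w P) (p : P),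
      (x = ρ.e (.inl p) ∧ y = ρ.e (.inr p)) ∨ (x = ρ.e (.inr p) ∧ y = ρ.e (.inl p)))
    (γ : ℝ) (hγ : 0 < γ) (hwγ : ∀ x y, w x y ≤ γ) (h : V → V → E) (M : ℝ) (hM : 0 < M)
    (hh : nsq h ≤ M) :
    ∫ φ, Real.exp (-act ι w 0 φ) * (lin ι w h φ) ^ 2 ∂(Measure.pi fun _ : V => μ)
      ≤ 2 * γ * M * part μ ι w 0 := by
  set t : ℝ := Real.sqrt (1 / (2 * γ * M))
  have ht : t ^ 2 = 1 / (2 * γ * M) := Real.sq_sqrt (by positivity)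
  have h1 := var_bound0 μ ι hι w hw hR γ hγ hwγ (fun x y => t • h x y)
  have hn : nsq (fun x y => t • h x y) = t ^ 2 * nsq h := by
    simp [nsq, norm_smul, mul_pow, Finset.mul_sum]
  have hl : ∀ φ, lin ι w (fun x y => t • h x y) φ = t * lin ι w h φ := by
    intro φ
    simp only [lin, inner_smul_right, Finset.mul_sum]
    refine Finset.sum_congr rfl fun x _ => Finset.sum_congr rfl fun y _ => ?_
    ring
  simp only [hl, hn, mul_pow] at h1
  have e : ∀ φ, Real.exp (-act ι w 0 φ) * (t ^ 2 * (lin ι w h φ) ^ 2) =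
    t ^ 2 * (Real.exp (-act ι w 0 φ) * (lin ι w h φ) ^ 2) := fun φ => by ring
  simp only [e] at h1
  rw [integral_const_mul] at h1
  have h2 : Real.exp (2 * γ * (t ^ 2 * nsq h)) ≤ 3 := by
    calc _ ≤ Real.exp 1 := by
          apply Real.exp_le_exp.2
          rw [ht]
          calc 2 * γ * (1 / (2 * γ * M) * nsq h) ≤ 2 * γ * (1 / (2 * γ * M) * M) := by gcongr
            _ = 1 := by field_simp
      _ ≤ 3 := by have := Real.exp_one_lt_d9; linarith
  have hz := part_pos μ ι hι w (0 : V → V → E)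
  set I := ∫ φ, Real.exp (-act ι w 0 φ) * (lin ι w h φ) ^ 2 ∂(Measure.pi fun _ : V => μ)
  have h3 : t ^ 2 * I ≤ part μ ι w 0 := by nlinarith
  rw [ht] at h3
  have : I = (2 * γ * M) * (1 / (2 * γ * M) * I) := by field_simp
  rw [this]
  gcongr

end var
end SpinRP

namespace SpinRP

section flow
variable {d L : ℕ} [NeZero L]

/-- Flow observable. -/
noncomputable def flx (f : EuclideanSpace ℝ ((Fin d → ZMod L) × Fin d)) (ψ : (Fin d → ZMod L) → ℝ) : ℝ :=
  ∑ x, ∑ j, f (x, j) * (ψ (x + Pi.single j 1) - ψ x)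

theorem flx_add (f g : EuclideanSpace ℝ ((Fin d → ZMod L) × Fin d)) (ψ : (Fin d → ZMod L) → ℝ) :
    flx (f + g) ψ = flx f ψ + flx g ψ := by
  simp [flx, add_mul, Finset.sum_add_distrib]

theorem flx_sub (f g : EuclideanSpace ℝ ((Fin d → ZMod L) × Fin d)) (ψ : (Fin d → ZMod L) → ℝ) :
    flx (f - g) ψ = flx f ψ - flx g ψ := by
  simp [flx, sub_mul, Finset.sum_sub_distrib]

/-- Uniform weight on an interval. -/
noncomputable def rho (m : ℕ) (a : ZMod L) : ℝ := if a.val < m then 1 / (m : ℝ) else 0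

/-- One-dimensional flow. -/
noncomputable def cfl (m : ℕ) (a : ZMod L) : ℝ :=
  if a.val < m then ((a.val : ℝ) + 1) / (m * (m + 1)) else 0

theorem rho_diff (m : ℕ) (hm : 1 ≤ m) (hL : m < L) (a : ZMod L) :
    rho (m + 1) a - rho m a = cfl m (a - 1) - cfl m a := by
  have hm' : (0 : ℝ) < m := by exact_mod_cast hm
  obtain ⟨n, hn, rfl⟩ : ∃ n : ℕ, n < L ∧ (n : ZMod L) = a :=
    ⟨a.val, ZMod.val_lt a, ZMod.natCast_zmod_val a⟩
  rcases n with _ | k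
  · have h1 : (((0 : ℕ) : ZMod L) - 1) = ((L - 1 : ℕ) : ZMod L) := by
      rw [Nat.cast_sub (by omega)]; simp
    have h2 : ((L - 1 : ℕ) : ZMod L).val = L - 1 := ZMod.val_natCast_of_lt (by omega)
    rw [h1]
    simp only [rho, cfl, h2, ZMod.val_natCast_of_lt hn]
    rw [if_pos (by omega), if_pos (by omega), if_neg (by omega), if_pos (by omega)]
    push_cast
    field_simp
    ring
  · have h1 : (((k + 1 : ℕ) : ZMod L) - 1) = (k : ZMod L) := by push_cast; ring
    have h2 : (k : ZMod L).val = k := ZMod.val_natCast_of_lt (by omega)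
    rw [h1]
    simp only [rho, cfl, h2, ZMod.val_natCast_of_lt hn]
    rcases lt_trichotomy (k + 1) m with h | h | h
    · rw [if_pos (by omega), if_pos (by omega), if_pos (by omega), if_pos (by omega)]
      push_cast
      field_simp
      ring
    · rw [if_pos (by omega), if_neg (by omega), if_pos (by omega), if_neg (by omega)]
      subst h
      push_cast
      field_simp
    · rw [if_neg (by omega), if_neg (by omega), if_neg (by omega), if_neg (by omega)]

theorem sum_sq_bd (g : ZMod L → ℝ) (m : ℕ) (hm : 1 ≤ m) (h0 : ∀ a, 0 ≤ g a)
    (h1 : ∀ a, g a ≤ if a.val < m then 1 / (m : ℝ) else 0) : ∑ a, g a ^ 2 ≤ 1 / (m : ℝ) := by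
  have hm' : (0 : ℝ) < m := by exact_mod_cast hm
  calc ∑ a, g a ^ 2 ≤ ∑ a : ZMod L, if a.val < m then (1 / (m : ℝ)) ^ 2 else 0 := by
        refine Finset.sum_le_sum fun a _ => ?_
        have := h1 a
        have h0 := h0 a
        split_ifs at this ⊢
        · gcongr
        · have : g a = 0 := le_antisymm this h0
          simp [this]
    _ = (Finset.univ.filter fun a : ZMod L => a.val < m).card * (1 / (m : ℝ)) ^ 2 := by
        rw [← Finset.sum_filter]; simp
    _ ≤ m * (1 / (m : ℝ)) ^ 2 := by
        gcongr
        have : (Finset.univ.filter fun a : ZMod L => a.val < m).card ≤ (Finset.range m).card := by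
          refine Finset.card_le_card_of_injOn ZMod.val (fun a ha => ?_) (ZMod.val_injective L).injOn
          simpa using ha
        simpa using this
    _ = _ := by field_simp

theorem rho_sq (m n : ℕ) (hm : 1 ≤ m) (hmn : m ≤ n) : ∑ a : ZMod L, rho n a ^ 2 ≤ 1 / (m : ℝ) := by
  have hm' : (0 : ℝ) < m := by exact_mod_cast hm
  refine (sum_sq_bd (rho n) n (by omega) (fun a => ?_) (fun a => le_rfl)).trans ?_
  · unfold rho; positivity
  · gcongr

theorem cfl_sq (m : ℕ) (hm : 1 ≤ m) : ∑ a : ZMod L, cfl m a ^ 2 ≤ 1 / (m : ℝ) := by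
  have hm' : (0 : ℝ) < m := by exact_mod_cast hm
  refine (sum_sq_bd (cfl m) m hm (fun a => ?_) (fun a => ?_))
  · unfold cfl; positivity
  · unfold cfl
    split_ifs with h
    · have : (a.val : ℝ) + 1 ≤ m := by exact_mod_cast h
      rw [div_le_div_iff₀ (by positivity) hm']
      nlinarith
    · exact le_rfl

/-- Average over a box. -/
noncomputable def avg (s : Fin d → ℕ) (b : Fin d → ZMod L) (ψ : (Fin d → ZMod L) → ℝ) : ℝ :=
  ∑ x : Fin d → ZMod L, (∏ k, rho (s k) (x k - b k)) * ψ x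

theorem step (s : Fin d → ℕ) (b : Fin d → ZMod L) (i : Fin d) (m : ℕ) (hm : 1 ≤ m)
    (hs : ∀ k, m ≤ s k) (hi : s i = m) (hL : m < L) :
    ∃ f : EuclideanSpace ℝ ((Fin d → ZMod L) × Fin d), ‖f‖ ^ 2 ≤ (1 / (m : ℝ)) ^ d ∧
      ∀ ψ, flx f ψ = avg (Function.update s i (m + 1)) b ψ - avg s b ψ := by
  let g : Fin d → ZMod L → ℝ := fun k a => if k = i then cfl m a else rho (s k) a
  let Fl : (Fin d → ZMod L) → ℝ := fun x => ∏ k, g k (x k - b k)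
  refine ⟨WithLp.toLp 2 fun q => if q.2 = i then Fl q.1 else 0, ?_, ?_⟩
  · rw [EuclideanSpace.norm_sq_eq, Fintype.sum_prod_type]
    have e1 : ∀ x : Fin d → ZMod L, ∑ j : Fin d, ‖(if j = i then Fl x else 0)‖ ^ 2 = Fl x ^ 2 := by
      intro x
      rw [Finset.sum_eq_single i]
      · simp
      · intro j _ hj; simp [hj]
      · simp
    simp only [e1]
    have e2 : ∑ x : Fin d → ZMod L, Fl x ^ 2 = ∏ k, ∑ a : ZMod L, g k (a - b k) ^ 2 := by
      rw [Finset.prod_univ_sum]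
      simp [Fl, Finset.prod_pow]
    rw [e2]
    calc ∏ k, ∑ a : ZMod L, g k (a - b k) ^ 2 ≤ ∏ _k : Fin d, (1 / (m : ℝ)) := by
          refine Finset.prod_le_prod (fun k _ => Finset.sum_nonneg fun a _ => by positivity)
            fun k _ => ?_
          have hsh := Equiv.sum_comp (Equiv.subRight (b k)) (fun a : ZMod L => g k a ^ 2)
          simp only [Equiv.subRight_apply] at hsh
          rw [hsh]
          by_cases hk : k = i
          · simp only [g, hk, if_true]; exact cfl_sq m hm
          · simp only [g, hk, if_false]; exact rho_sq m (s k) hm (hs k)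
      _ = _ := by simp
  · intro ψ
    have e1 : flx (WithLp.toLp 2 fun q : (Fin d → ZMod L) × Fin d => if q.2 = i then Fl q.1 else 0) ψ =
        ∑ x, Fl x * (ψ (x + Pi.single i 1) - ψ x) := by
      unfold flx
      refine Finset.sum_congr rfl fun x _ => ?_
      rw [Finset.sum_eq_single i]
      · simp
      · intro j _ hj; simp [hj]
      · simp
    have e2 : ∑ x, Fl x * ψ (x + Pi.single i 1) = ∑ x, Fl (x - Pi.single i 1) * ψ x := by
      have hsh := Equiv.sum_comp (Equiv.addRight (Pi.single i 1 : Fin d → ZMod L))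
        (fun x : Fin d → ZMod L => Fl (x - Pi.single i 1) * ψ x)
      rw [← hsh]
      simp
    rw [e1]
    simp only [mul_sub, Finset.sum_sub_distrib, e2, avg]
    rw [← Finset.sum_sub_distrib, ← Finset.sum_sub_distrib]
    refine Finset.sum_congr rfl fun x _ => ?_
    rw [← sub_mul, ← sub_mul]
    congr 1
    simp only [Fl]
    rw [← Finset.mul_prod_erase _ _ (Finset.mem_univ i), ← Finset.mul_prod_erase _ _ (Finset.mem_univ i),
      ← Finset.mul_prod_erase _ _ (Finset.mem_univ i), ← Finset.mul_prod_erase _ _ (Finset.mem_univ i)]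
    have p1 : ∏ k ∈ Finset.univ.erase i, g k ((x - Pi.single i 1 : Fin d → ZMod L) k - b k) =
        ∏ k ∈ Finset.univ.erase i, rho (s k) (x k - b k) := by
      refine Finset.prod_congr rfl fun k hk => ?_
      have hk := Finset.ne_of_mem_erase hk
      simp [g, hk]
    have p2 : ∏ k ∈ Finset.univ.erase i, g k (x k - b k) =
        ∏ k ∈ Finset.univ.erase i, rho (s k) (x k - b k) := by
      refine Finset.prod_congr rfl fun k hk => ?_
      have hk := Finset.ne_of_mem_erase hk
      simp [g, hk]
    have p3 : ∏ k ∈ Finset.univ.erase i, rho (Function.update s i (m + 1) k) (x k - b k) =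
        ∏ k ∈ Finset.univ.erase i, rho (s k) (x k - b k) := by
      refine Finset.prod_congr rfl fun k hk => ?_
      have hk := Finset.ne_of_mem_erase hk
      simp [hk]
    rw [p1, p2, p3, ← sub_mul, ← sub_mul]
    congr 1
    simp only [g, if_true, Function.update_self, hi, Pi.sub_apply, Pi.single_eq_same]
    rw [rho_diff m hm hL]
    congr 2
    ring

/-- Decay rate. -/
noncomputable def rr (m : ℕ) : ℝ := ((m : ℝ) ^ (3 / 2 : ℝ))⁻¹

theorem rr_nonneg (m : ℕ) : 0 ≤ rr m := by unfold rr; positivity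

theorem rr_sq (m : ℕ) : rr m ^ 2 = (1 / (m : ℝ)) ^ 3 := by
  unfold rr
  rw [inv_pow, ← Real.rpow_mul_natCast (by positivity), one_div, inv_pow]
  norm_num

theorem rr_summable : Summable rr := Real.summable_nat_rpow_inv.2 (by norm_num)

theorem scale (hd : 3 ≤ d) (b : Fin d → ZMod L) (m : ℕ) (hm : 1 ≤ m) (hL : m < L) (k : ℕ) (hk : k ≤ d) :
    ∃ f : EuclideanSpace ℝ ((Fin d → ZMod L) × Fin d), ‖f‖ ≤ k * rr m ∧
      ∀ ψ, flx f ψ = avg (fun j => if j.val < k then m + 1 else m) b ψ - avg (fun _ => m) b ψ := by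
  induction k with
  | zero => exact ⟨0, by simp, fun ψ => by simp [flx]⟩
  | succ k ih =>
    obtain ⟨f, hf, hf2⟩ := ih (by omega)
    obtain ⟨g, hg, hg2⟩ := step (fun j : Fin d => if j.val < k then m + 1 else m) b ⟨k, by omega⟩ m hm
      (fun j => by split_ifs <;> omega) (by simp) hL
    refine ⟨f + g, ?_, fun ψ => ?_⟩
    · have h1 : ‖g‖ ≤ rr m := by
        refine abs_le_of_sq_le_sq' ?_ (rr_nonneg m) |>.2
        rw [rr_sq]
        refine hg.trans (pow_le_pow_of_le_one (by positivity) ?_ hd)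
        rw [div_le_one (by positivity)]
        exact_mod_cast hm
      calc ‖f + g‖ ≤ ‖f‖ + ‖g‖ := norm_add_le _ _
        _ ≤ k * rr m + rr m := add_le_add hf h1
        _ = _ := by push_cast; ring
    · have : Function.update (fun j : Fin d => if j.val < k then m + 1 else m) ⟨k, by omega⟩ (m + 1) =
          fun j : Fin d => if j.val < k + 1 then m + 1 else m := by
        ext j
        by_cases hj : j = ⟨k, by omega⟩
        · subst hj; simp
        · rw [Function.update_of_ne hj]
          have : j.val ≠ k := fun h => hj (Fin.ext h)
          congr 1
          simp only [eq_iff_iff]; omega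
      rw [flx_add, hf2, hg2, this]
      ring

theorem scales (hd : 3 ≤ d) (b : Fin d → ZMod L) (m : ℕ) (hL : m < L) :
    ∃ f : EuclideanSpace ℝ ((Fin d → ZMod L) × Fin d),
      ‖f‖ ≤ d * ∑ k ∈ Finset.range (m + 1), rr k ∧
      ∀ ψ, flx f ψ = avg (fun _ => m + 1) b ψ - avg (fun _ => 1) b ψ := by
  induction m with
  | zero => 
    refine ⟨0, ?_, fun ψ => by simp [flx]⟩
    have := rr_nonneg 0
    simp; positivity
  | succ m ih =>
    obtain ⟨f, hf, hf2⟩ := ih (by omega)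
    obtain ⟨g, hg, hg2⟩ := scale hd b (m + 1) (by omega) hL d le_rfl
    refine ⟨f + g, ?_, fun ψ => ?_⟩
    · rw [Finset.sum_range_succ, mul_add]
      exact (norm_add_le _ _).trans (add_le_add hf hg)
    · rw [flx_add, hf2, hg2]
      simp

theorem avg_one (b : Fin d → ZMod L) (ψ : (Fin d → ZMod L) → ℝ) : avg (fun _ => 1) b ψ = ψ b := by
  unfold avg
  rw [Finset.sum_eq_single b]
  · simp [rho]
  · intro x _ hx
    obtain ⟨k, hk⟩ := Function.ne_iff.1 hx
    rw [Finset.prod_eq_zero (Finset.mem_univ k), zero_mul]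
    unfold rho
    rw [if_neg]
    simpa [sub_eq_zero] using hk
  · simp

theorem avg_full (b : Fin d → ZMod L) (ψ : (Fin d → ZMod L) → ℝ) :
    avg (fun _ => L) b ψ = ∑ x, (1 / (L : ℝ)) ^ d * ψ x := by
  unfold avg rho
  simp [ZMod.val_lt]

theorem exists_flow (hd : 3 ≤ d) (x y : Fin d → ZMod L) :
    ∃ f : EuclideanSpace ℝ ((Fin d → ZMod L) × Fin d),
      ‖f‖ ≤ 2 * d * ∑' k, rr k ∧ ∀ ψ, flx f ψ = ψ x - ψ y := by
  have hL : 0 < L := Nat.pos_of_ne_zero (NeZero.ne L)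
  obtain ⟨f, hf, hf2⟩ := scales hd y (L - 1) (by omega)
  obtain ⟨g, hg, hg2⟩ := scales hd x (L - 1) (by omega)
  have hb : ∑ k ∈ Finset.range (L - 1 + 1), rr k ≤ ∑' k, rr k :=
    rr_summable.sum_le_tsum _ fun k _ => rr_nonneg k
  rw [Nat.sub_add_cancel hL] at hf2 hg2
  refine ⟨f - g, ?_, fun ψ => ?_⟩
  · calc ‖f - g‖ ≤ ‖f‖ + ‖g‖ := norm_sub_le _ _
      _ ≤ d * (∑' k, rr k) + d * (∑' k, rr k) :=
        add_le_add (hf.trans (by gcongr)) (hg.trans (by gcongr))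
      _ = _ := by ring
  · rw [flx_sub, hf2, hg2, avg_one, avg_one, avg_full, avg_full]
    ring

end flow
end SpinRP

namespace SpinRP

section torus
variable {d L : ℕ} [NeZero L]

theorem adj_iff (x y : TorusPt d L) : torusAdj x y ↔
    ∃ j, (∀ k, k ≠ j → y k = x k) ∧ (y j = x j + 1 ∨ y j = x j - 1) := by
  unfold torusAdj
  refine exists_congr fun j => ?_
  constructor
  · rintro (rfl | rfl)
    · exact ⟨fun k hk => Function.update_of_ne hk _ _, Or.inl (Function.update_self _ _ _)⟩
    · exact ⟨fun k hk => Function.update_of_ne hk _ _, Or.inr (Function.update_self _ _ _)⟩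
  · rintro ⟨h1, h2 | h2⟩
    · exact Or.inl (Function.eq_update_iff.2 ⟨h2, h1⟩)
    · exact Or.inr (Function.eq_update_iff.2 ⟨h2, h1⟩)

/-- Reflection of the torus in the hyperplane between `a` and `a + 1` in direction `j`. -/
def theta (j : Fin d) (a : ZMod L) (x : TorusPt d L) : TorusPt d L :=
  Function.update x j (2 * a + 1 - x j)

theorem theta_same (j : Fin d) (a : ZMod L) (x : TorusPt d L) : theta j a x j = 2 * a + 1 - x j :=
  Function.update_self _ _ _

theorem theta_ne (j : Fin d) (a : ZMod L) (x : TorusPt d L) (k : Fin d) (hk : k ≠ j) :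
    theta j a x k = x k := Function.update_of_ne hk _ _

theorem theta_theta (j : Fin d) (a : ZMod L) (x : TorusPt d L) : theta j a (theta j a x) = x := by
  ext k
  by_cases hk : k = j
  · subst hk; simp [theta_same]
  · simp [theta_ne, hk]

theorem adj_theta_mp (j : Fin d) (a : ZMod L) (x y : TorusPt d L) (h : torusAdj x y) :
    torusAdj (theta j a x) (theta j a y) := by
  rw [adj_iff] at h ⊢
  obtain ⟨i, h1, h2⟩ := h
  refine ⟨i, fun k hk => ?_, ?_⟩
  · by_cases hkj : k = j
    · subst hkj; rw [theta_same, theta_same, h1 k hk]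
    · rw [theta_ne _ _ _ _ hkj, theta_ne _ _ _ _ hkj, h1 k hk]
  · by_cases hij : i = j
    · subst hij
      rw [theta_same, theta_same]
      rcases h2 with h2 | h2
      · right; rw [h2]; ring
      · left; rw [h2]; ring
    · rw [theta_ne _ _ _ _ hij, theta_ne _ _ _ _ hij]; exact h2

theorem adj_theta (j : Fin d) (a : ZMod L) (x y : TorusPt d L) :
    torusAdj (theta j a x) (theta j a y) ↔ torusAdj x y := by
  refine ⟨fun h => ?_, adj_theta_mp j a x y⟩
  have := adj_theta_mp j a _ _ h
  rwa [theta_theta, theta_theta] at this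

theorem val_neg (t : ZMod L) : (-1 - t).val = L - 1 - t.val := by
  have ht := ZMod.val_lt t
  have : (-1 - t) = ((L - 1 - t.val : ℕ) : ZMod L) := by
    rw [Nat.cast_sub (by omega), Nat.cast_sub (by omega)]
    simp
  rw [this]
  exact ZMod.val_natCast_of_lt (by omega)

/-- Half of the torus. -/
abbrev Half (j : Fin d) (a : ZMod L) : Type := {x : TorusPt d L // (x j - a - 1).val < L / 2}

theorem half_theta (hL : Even L) (j : Fin d) (a : ZMod L) (x : TorusPt d L) :
    (theta j a x j - a - 1).val < L / 2 ↔ ¬ (x j - a - 1).val < L / 2 := by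
  have e : theta j a x j - a - 1 = -1 - (x j - a - 1) := by rw [theta_same]; ring
  rw [e, val_neg]
  have := ZMod.val_lt (x j - a - 1)
  obtain ⟨n, hn⟩ := hL
  omega

theorem half_bij (hL : Even L) (j : Fin d) (a : ZMod L) :
    Function.Bijective (Sum.elim (fun p : Half j a => p.1) (fun p : Half j a => theta j a p.1)) := by
  constructor
  · rintro (p | p) (q | q) h
    · exact congrArg _ (Subtype.ext h)
    · exfalso
      have h : p.1 = theta j a q.1 := h
      have h1 := p.2
      rw [h, half_theta hL] at h1
      exact h1 q.2
    · exfalso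
      have h : theta j a p.1 = q.1 := h
      have h1 := q.2
      rw [← h, half_theta hL] at h1
      exact h1 p.2
    · have h : theta j a p.1 = theta j a q.1 := h
      have := congrArg (theta j a) h
      rw [theta_theta, theta_theta] at this
      exact congrArg _ (Subtype.ext this)
  · intro x
    by_cases hx : (x j - a - 1).val < L / 2
    · exact ⟨.inl ⟨x, hx⟩, rfl⟩
    · exact ⟨.inr ⟨theta j a x, (half_theta hL j a x).2 hx⟩, theta_theta j a x⟩

theorem cross_diag (hL : Even L) (j : Fin d) (a : ZMod L) (p q : Half j a)
    (h : torusAdj p.1 (theta j a q.1)) : p = q := by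
  rw [adj_iff] at h
  obtain ⟨i, h1, h2⟩ := h
  obtain ⟨p, hp⟩ := p
  obtain ⟨q, hq⟩ := q
  simp only at h1 h2
  have hij : i = j := by
    by_contra hne
    have h3 := h1 j (fun h => hne h.symm)
    have h4 := (half_theta hL j a q)
    rw [h3] at h4
    exact h4.1 hp hq
  subst hij
  have hoff : ∀ k, k ≠ i → p k = q k := fun k hk => by
    rw [← h1 k hk, theta_ne _ _ _ _ hk]
  have hpi : p i = q i := by
    rw [theta_same] at h2
    obtain ⟨n, hn⟩ := hL
    have hv : (p i - a - 1) = (q i - a - 1) := by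
      set t := p i - a - 1 with ht
      set s := q i - a - 1 with hs
      have hps : (t.val : ZMod L) = t := ZMod.natCast_zmod_val t
      have hqs : (s.val : ZMod L) = s := ZMod.natCast_zmod_val s
      have hst : ((t.val + s.val : ℕ) : ZMod L) = ((L - 2 : ℕ) : ZMod L) ∨
          ((t.val + s.val : ℕ) : ZMod L) = ((0 : ℕ) : ZMod L) := by
        have hL2 : 2 ≤ L := by have := NeZero.ne L; omega
        push_cast [Nat.cast_sub hL2]
        rw [hps, hqs, ZMod.natCast_self]
        rcases h2 with h2 | h2
        · left; rw [ht, hs]; linear_combination -h2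
        · right; rw [ht, hs]; linear_combination -h2
      rw [← hps, ← hqs]
      congr 1
      rcases hst with h | h
      · have := congrArg ZMod.val h
        rw [ZMod.val_natCast_of_lt (by omega), ZMod.val_natCast_of_lt (by omega)] at this
        omega
      · have := congrArg ZMod.val h
        rw [ZMod.val_natCast_of_lt (by omega), ZMod.val_natCast_of_lt (by omega)] at this
        omega
    have := congrArg (fun t => t + a + 1) hv
    simpa using this
  apply Subtype.ext
  ext k
  by_cases hk : k = i
  · rw [hk]; exact hpi
  · exact hoff k hk

theorem adj_symm (x y : TorusPt d L) : torusAdj x y → torusAdj y x := by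
  rw [adj_iff, adj_iff]
  rintro ⟨j, h1, h2⟩
  refine ⟨j, fun k hk => (h1 k hk).symm, ?_⟩
  rcases h2 with h2 | h2
  · right; rw [h2]; ring
  · left; rw [h2]; ring

/-- Edge weights. -/
noncomputable def wt (d L : ℕ) (γ : ℝ) (x y : TorusPt d L) : ℝ := if torusAdj x y then γ else 0

/-- The reflection structure of the torus. -/
noncomputable def torusRefl (hL : Even L) (γ : ℝ) (j : Fin d) (a : ZMod L) :
    Refl (wt d L γ) (Half j a) where
  e := Equiv.ofBijective _ (half_bij hL j a)
  same p q := by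
    simp only [Equiv.ofBijective_apply, Sum.elim_inl, Sum.elim_inr, wt, adj_theta]
  cross p q := by
    simp only [Equiv.ofBijective_apply, Sum.elim_inl, Sum.elim_inr, wt]
    have e : torusAdj p.1 (theta j a q.1) ↔ torusAdj (theta j a p.1) q.1 := by
      rw [← adj_theta j a (theta j a p.1), theta_theta]
    simp only [e]
  diag p q hpq := by
    simp only [Equiv.ofBijective_apply, Sum.elim_inl, Sum.elim_inr, wt]
    exact if_neg fun h => hpq (cross_diag hL j a p q h)

theorem torus_refl (hL : Even L) (γ : ℝ) (x y : TorusPt d L) (h : wt d L γ x y ≠ 0) :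
    ∃ (P : Type) (_ : Fintype P) (ρ : Refl (wt d L γ) P) (p : P),
      (x = ρ.e (.inl p) ∧ y = ρ.e (.inr p)) ∨ (x = ρ.e (.inr p) ∧ y = ρ.e (.inl p)) := by
  have hadj : torusAdj x y := by
    by_contra hc; exact h (if_neg hc)
  have hpos : 0 < L / 2 := by
    obtain ⟨n, hn⟩ := hL; have := NeZero.ne L; omega
  rw [adj_iff] at hadj
  obtain ⟨j, h1, h2 | h2⟩ := hadj
  · have hy : (y j - x j - 1).val < L / 2 := by rw [h2]; simpa using hpos
    refine ⟨Half j (x j), inferInstance, torusRefl hL γ j (x j), ⟨y, hy⟩, Or.inr ⟨?_, rfl⟩⟩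
    change x = theta j (x j) y
    ext k
    by_cases hk : k = j
    · subst hk; rw [theta_same, h2]; ring
    · rw [theta_ne _ _ _ _ hk, h1 k hk]
  · have hx : (x j - y j - 1).val < L / 2 := by rw [h2]; simpa using hpos
    refine ⟨Half j (y j), inferInstance, torusRefl hL γ j (y j), ⟨x, hx⟩, Or.inl ⟨rfl, ?_⟩⟩
    change y = theta j (y j) x
    ext k
    by_cases hk : k = j
    · subst hk; rw [theta_same, h2]; ring
    · rw [theta_ne _ _ _ _ hk, h1 k hk]

end torus
end SpinRP

namespace SpinRP

section assembly

theorem sphere_prob (N : ℕ) (hN : 1 ≤ N) : IsProbabilityMeasure (sphereUniform N) := by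
  haveI : Nonempty (Fin N) := ⟨⟨0, hN⟩⟩
  haveI : Nontrivial (EuclideanSpace ℝ (Fin N)) := by
    rw [← Module.finrank_pos_iff (R := ℝ)]
    simp only [finrank_euclideanSpace, Fintype.card_fin]; omega
  constructor
  rw [sphereUniform, Measure.smul_apply, smul_eq_mul]
  refine ENNReal.inv_mul_cancel ?_ (measure_ne_top _ _)
  rw [Ne, Measure.measure_univ_eq_zero]
  exact Measure.toSphere_ne_zero _

variable {d L N : ℕ} [NeZero L]

/-- The edge field associated to a flow. -/
noncomputable def fld (f : EuclideanSpace ℝ ((Fin d → ZMod L) × Fin d)) (k : Fin N)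
    (x y : TorusPt d L) : EuclideanSpace ℝ (Fin N) :=
  ∑ j, if y = x + Pi.single j 1 then f (x, j) • EuclideanSpace.single k (1 : ℝ) else 0

theorem adj_single (x : TorusPt d L) (j : Fin d) : torusAdj x (x + Pi.single j 1) := by
  rw [adj_iff]
  exact ⟨j, fun k hk => by simp [hk], Or.inl (by simp)⟩

theorem lin_fld (γ : ℝ) (f : EuclideanSpace ℝ ((Fin d → ZMod L) × Fin d)) (k : Fin N)
    (φ : SpinCfg d L N) :
    lin (fun s : SpinSphere N => (s : EuclideanSpace ℝ (Fin N))) (wt d L γ) (fld f k) φ =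
      γ * flx f (fun x => (φ x : EuclideanSpace ℝ (Fin N)) k) := by
  unfold lin flx
  rw [Finset.mul_sum]
  refine Finset.sum_congr rfl fun x _ => ?_
  simp only [fld, inner_sum, Finset.mul_sum]
  rw [Finset.sum_comm]
  refine Finset.sum_congr rfl fun j _ => ?_
  rw [Finset.sum_eq_single (x + Pi.single j 1)]
  · rw [if_pos rfl, wt, if_pos (adj_single x j), inner_smul_right, EuclideanSpace.inner_single_right]
    simp
  · intro y _ hy
    rw [if_neg hy]; simp
  · simp

theorem fld_norm (hL : 2 ≤ L) (f : EuclideanSpace ℝ ((Fin d → ZMod L) × Fin d)) (k : Fin N)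
    (x y : TorusPt d L) :
    ‖fld f k x y‖ ^ 2 = ∑ j, if y = x + Pi.single j 1 then f (x, j) ^ 2 else 0 := by
  haveI : Fact (1 < L) := ⟨hL⟩
  unfold fld
  by_cases h : ∃ j, y = x + Pi.single j 1
  · obtain ⟨j, rfl⟩ := h
    have hi : ∀ i, i ≠ j → ¬ (x + Pi.single j 1 = x + Pi.single i (1 : ZMod L)) := by
      intro i hi he
      have := congrFun (add_left_cancel he) i
      simp [hi] at this
    rw [Finset.sum_eq_single j, Finset.sum_eq_single j]
    · simp [norm_smul]
    · intro i _ h; rw [if_neg (hi i h)]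
    · simp
    · intro i _ h; rw [if_neg (hi i h)]
    · simp
  · push Not at h
    simp [h]

theorem nsq_fld (hL : 2 ≤ L) (f : EuclideanSpace ℝ ((Fin d → ZMod L) × Fin d)) (k : Fin N) :
    nsq (fld f k) = ‖f‖ ^ 2 := by
  unfold nsq
  simp only [fld_norm hL]
  rw [EuclideanSpace.norm_sq_eq, Fintype.sum_prod_type]
  refine Finset.sum_congr rfl fun x _ => ?_
  rw [Finset.sum_comm]
  refine Finset.sum_congr rfl fun j _ => ?_
  simp

theorem sph_norm (s : SpinSphere N) : ‖(s : EuclideanSpace ℝ (Fin N))‖ = 1 := by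
  simpa using s.2

theorem dist_inner (s t : SpinSphere N) :
    ‖(t : EuclideanSpace ℝ (Fin N)) - s‖ ^ 2 = 2 - 2 * ⟪(s : EuclideanSpace ℝ (Fin N)), t⟫ := by
  rw [norm_sub_sq_real, sph_norm, sph_norm, real_inner_comm]; ring

theorem ham_eq (β : ℝ) : ∃ K : ℝ, ∀ φ : SpinCfg d L N,
    Real.exp (-β * hamiltonian φ) = Real.exp K *
      Real.exp (-act (fun s : SpinSphere N => (s : EuclideanSpace ℝ (Fin N))) (wt d L (β / 4)) 0 φ) := by
  refine ⟨∑ x : TorusPt d L, ∑ y : TorusPt d L, if torusAdj x y then β / 2 else 0, fun φ => ?_⟩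
  rw [← Real.exp_add]
  congr 1
  unfold hamiltonian act
  rw [← sub_eq_add_neg, ← Finset.sum_sub_distrib, ← mul_assoc, Finset.mul_sum]
  refine Finset.sum_congr rfl fun x _ => ?_
  rw [← Finset.sum_sub_distrib, Finset.mul_sum]
  refine Finset.sum_congr rfl fun y _ => ?_
  simp only [Pi.zero_apply, sub_zero, dist_inner, wt]
  split_ifs <;> ring

theorem main_bound (hd : 3 ≤ d) (hN : 1 ≤ N) (hL : Even L) (β M : ℝ) (hβ : 0 < β)
    (hM : (2 * d * ∑' k, rr k) ^ 2 < M) (hβM : 8 * N * M < β) (o z : TorusPt d L) :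
    1 / 2 ≤ corrDot d L N β o z := by
  haveI := sphere_prob N hN
  have hL2 : 2 ≤ L := by obtain ⟨n, hn⟩ := hL; have := NeZero.ne L; omega
  have hM0 : 0 < M := lt_of_le_of_lt (sq_nonneg _) hM
  set ι : SpinSphere N → EuclideanSpace ℝ (Fin N) := fun s => s with hι
  have hιc : Continuous ι := continuous_subtype_val
  set w := wt d L (β / 4) with hw
  set μ := sphereUniform N with hμ
  obtain ⟨K, hK⟩ := ham_eq (d := d) (L := L) (N := N) β
  obtain ⟨f, hf, hf2⟩ := exists_flow hd z o
  have hfM : ‖f‖ ^ 2 ≤ M := (pow_le_pow_left₀ (norm_nonneg _) hf 2).trans hM.le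
  have hpos := part_pos μ ι hιc w 0
  have hk : ∀ k : Fin N, ∫ φ, Real.exp (-act ι w 0 φ) *
      ((φ z : EuclideanSpace ℝ (Fin N)) k - (φ o : EuclideanSpace ℝ (Fin N)) k) ^ 2
        ∂(Measure.pi fun _ : TorusPt d L => μ) ≤ 8 * M / β * part μ ι w 0 := by
    intro k
    have h1 := var_bound μ ι hιc w (fun x y => by rw [hw, wt]; split_ifs <;> positivity)
      (fun x y h => torus_refl hL _ x y h) (β / 4) (by positivity)
      (fun x y => by rw [hw, wt]; split_ifs; exacts [le_rfl, by positivity])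
      (fld f k) M hM0 ((nsq_fld hL2 f k).le.trans hfM)
    simp only [hι, hw, lin_fld, hf2] at h1
    have h2 : ∀ φ : SpinCfg d L N, Real.exp (-act ι w 0 φ) * (β / 4 *
        ((φ z : EuclideanSpace ℝ (Fin N)) k - (φ o : EuclideanSpace ℝ (Fin N)) k)) ^ 2 =
        (β / 4) ^ 2 * (Real.exp (-act ι w 0 φ) *
          ((φ z : EuclideanSpace ℝ (Fin N)) k - (φ o : EuclideanSpace ℝ (Fin N)) k) ^ 2) := by
      intro φ; ring
    simp only [hι, hw] at h2
    simp only [h2] at h1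
    rw [integral_const_mul] at h1
    have h3 := mul_le_mul_of_nonneg_left h1 (show 0 ≤ ((β / 4) ^ 2)⁻¹ by positivity)
    rw [← mul_assoc, inv_mul_cancel₀ (by positivity), one_mul] at h3
    refine h3.trans (le_of_eq ?_)
    field_simp
    ring
  have hcont : ∀ k : Fin N, Continuous fun φ : SpinCfg d L N => Real.exp (-act ι w 0 φ) *
      ((φ z : EuclideanSpace ℝ (Fin N)) k - (φ o : EuclideanSpace ℝ (Fin N)) k) ^ 2 := by
    intro k
    have := act_cont' ι hιc w (0 : TorusPt d L → TorusPt d L → EuclideanSpace ℝ (Fin N))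
    fun_prop
  have hexpc : Continuous fun φ : SpinCfg d L N => Real.exp (-act ι w 0 φ) := by
    have := act_cont' ι hιc w (0 : TorusPt d L → TorusPt d L → EuclideanSpace ℝ (Fin N))
    fun_prop
  have hsum : ∫ φ, Real.exp (-act ι w 0 φ) *
      ‖(φ z : EuclideanSpace ℝ (Fin N)) - (φ o : EuclideanSpace ℝ (Fin N))‖ ^ 2
        ∂(Measure.pi fun _ : TorusPt d L => μ) ≤ N * (8 * M / β * part μ ι w 0) := by
    have e : ∀ φ : SpinCfg d L N, Real.exp (-act ι w 0 φ) *
      ‖(φ z : EuclideanSpace ℝ (Fin N)) - (φ o : EuclideanSpace ℝ (Fin N))‖ ^ 2 =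
      ∑ k, Real.exp (-act ι w 0 φ) *
      ((φ z : EuclideanSpace ℝ (Fin N)) k - (φ o : EuclideanSpace ℝ (Fin N)) k) ^ 2 := by
      intro φ
      rw [EuclideanSpace.norm_sq_eq, Finset.mul_sum]
      simp
    simp only [e]
    rw [integral_finsetSum _ fun k _ => cint μ _ (hcont k)]
    refine (Finset.sum_le_sum fun k _ => hk k).trans (le_of_eq ?_)
    simp
  have hnum : ∫ φ, ⟪(φ o : EuclideanSpace ℝ (Fin N)), (φ z : EuclideanSpace ℝ (Fin N))⟫ *
      Real.exp (-act ι w 0 φ) ∂(Measure.pi fun _ : TorusPt d L => μ) =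
      part μ ι w 0 - 1 / 2 * ∫ φ, Real.exp (-act ι w 0 φ) *
      ‖(φ z : EuclideanSpace ℝ (Fin N)) - (φ o : EuclideanSpace ℝ (Fin N))‖ ^ 2
        ∂(Measure.pi fun _ : TorusPt d L => μ) := by
    rw [part, ← integral_const_mul, ← integral_sub (cint μ _ hexpc) (cint μ _ (by fun_prop))]
    congr 1
    ext φ
    rw [dist_inner]; ring
  have hfin : 1 / 2 * part μ ι w 0 ≤
      ∫ φ, ⟪(φ o : EuclideanSpace ℝ (Fin N)), (φ z : EuclideanSpace ℝ (Fin N))⟫ *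
      Real.exp (-act ι w 0 φ) ∂(Measure.pi fun _ : TorusPt d L => μ) := by
    rw [hnum]
    have h1 : N * (8 * M / β * part μ ι w 0) ≤ part μ ι w 0 := by
      have : N * (8 * M / β) ≤ 1 := by
        rw [← mul_div_assoc, div_le_one hβ]; linarith
      nlinarith
    linarith
  unfold corrDot gibbsExp spinMeasure
  have e1 : ∀ φ : SpinCfg d L N, Real.exp (-β * hamiltonian φ) =
    Real.exp K * Real.exp (-act ι w 0 φ) := hK
  have e2 : ∀ φ : SpinCfg d L N,
      ⟪(φ o : EuclideanSpace ℝ (Fin N)), (φ z : EuclideanSpace ℝ (Fin N))⟫ *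
        (Real.exp K * Real.exp (-act ι w 0 φ)) = Real.exp K *
      (⟪(φ o : EuclideanSpace ℝ (Fin N)), (φ z : EuclideanSpace ℝ (Fin N))⟫ *
        Real.exp (-act ι w 0 φ)) := fun φ => by ring
  simp only [e1, e2]
  rw [integral_const_mul, integral_const_mul]
  change 1 / 2 ≤ (Real.exp K * part μ ι w 0)⁻¹ * _
  have hKp := Real.exp_pos K
  rw [inv_mul_eq_div, le_div_iff₀ (by positivity)]
  have := mul_le_mul_of_nonneg_left hfin hKp.le
  linarith

end assembly
end SpinRP

/-- **Point-wise uniform positivity for the spin O(N) model.**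
Let `d ≥ 3` and `N ≥ 1`. There exists `β₀` such that for every `β > β₀` there exist a
constant `C > 0` and `L₀` such that, for every even `L > L₀` and every `z ∈ T_L` with
`‖z‖_∞ < L/8`, one has `⟨φ_o ⬝ φ_z⟩_{L,N,β} ≥ C`. -/
theorem spin_corr_pointwise_uniform_positivity (d N : ℕ) (hd : 3 ≤ d) (hN : 1 ≤ N) :
    ∃ β₀ : ℝ, ∀ β : ℝ, β₀ < β →
      ∃ C : ℝ, 0 < C ∧ ∃ L₀ : ℕ, ∀ (L : ℕ) [NeZero L], Even L → L₀ < L →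
        ∀ z : TorusPt d L, (tnormInf z : ℝ) < (L : ℝ) / 8 →
          C ≤ corrDot d L N β (torusOrigin d L) z := by
  refine ⟨8 * N * ((2 * d * ∑' k, SpinRP.rr k) ^ 2 + 1), fun β hβ => ⟨1 / 2, by norm_num, 0, ?_⟩⟩
  intro L _ hL _ z _
  refine SpinRP.main_bound hd hN hL β _ (lt_of_le_of_lt (by positivity) hβ) (lt_add_one _) hβ _ z
end

section
/- Let Θ be the reflection through sites in a plane orthogonal to e_i, and let A ⊆ T_L. Setting A^+ = (A ∩ T_L^+) ∪ Θ(A ∩ T_L^+) and A^- = (A ∩ T_L^-) ∪ Θ(A ∩ T_L^-), one has ∑_{x,y ∈ A, x ≠ y} ⟨φ_x^1 φ_y^1⟩_{L,N,β} ≤ (1/2) ( ∑_{x,y ∈ A^+, x ≠ y} ⟨φ_x^1 φ_y^1⟩_{L,N,β} + ∑_{x,y ∈ A^-, x ≠ y} ⟨φ_x^1 φ_y^1⟩_{L,N,β} ), where all sums are over ordered pairs of distinct vertices. -/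
open MeasureTheory Metric
open scoped RealInnerProductSpace BigOperators

/-- Reflection of torus sites through the plane of sites `{x : x_i = m}`:
`Θ(x)_i = 2m - x_i (mod L)` and the other coordinates are unchanged. -/
def reflSite {d L : ℕ} (i : Fin d) (m : ℕ) (x : TorusPt d L) : TorusPt d L :=
  Function.update x i (2 * (m : ZMod L) - x i)

/-- Membership in the half-torus `T_L^+ = {x : x_i - m (mod L) ∈ {0,…,L/2}}`. -/
def inPlusSite {d L : ℕ} (i : Fin d) (m : ℕ) (x : TorusPt d L) : Prop :=
  (x i - (m : ZMod L)).val ≤ L / 2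

/-- Membership in the other half-torus `T_L^- = Θ(T_L^+)`. -/
def inMinusSite {d L : ℕ} (i : Fin d) (m : ℕ) (x : TorusPt d L) : Prop :=
  inPlusSite i m (reflSite i m x)

/-- Membership in the fixed-point set `T_L^R = {x : x_i = m or x_i = m + L/2 (mod L)}`. -/
def inFixedSite {d L : ℕ} (i : Fin d) (m : ℕ) (x : TorusPt d L) : Prop :=
  (x i - (m : ZMod L)).val = 0 ∨ (x i - (m : ZMod L)).val = L / 2

instance {d L : ℕ} (i : Fin d) (m : ℕ) : DecidablePred (inPlusSite (d := d) (L := L) i m) :=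
  fun x => by unfold inPlusSite; infer_instance

instance {d L : ℕ} (i : Fin d) (m : ℕ) : DecidablePred (inMinusSite (d := d) (L := L) i m) :=
  fun x => by unfold inMinusSite inPlusSite; infer_instance

instance {d L : ℕ} (i : Fin d) (m : ℕ) : DecidablePred (inFixedSite (d := d) (L := L) i m) :=
  fun x => by unfold inFixedSite; infer_instance

/-- Reflection through sites acting on spin configurations: `(Θφ)_x = φ_{Θ(x)}`. -/
def reflSiteCfg {d L N : ℕ} (i : Fin d) (m : ℕ) (φ : SpinCfg d L N) : SpinCfg d L N :=
  fun x => φ (reflSite i m x)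

/-- The set `H_L` of vertices with all coordinates nonzero, together with the
nonzero points of the cartesian axes. -/
def inHL {d L : ℕ} (x : TorusPt d L) : Prop :=
  (∀ j, x j ≠ 0) ∨ ∃ i, x i ≠ 0 ∧ ∀ j, j ≠ i → x j = 0

/-- `ẑ_i = min(z_i, L - z_i)`, the torus distance of the `i`-th coordinate from `0`. -/
def hatCoord {d L : ℕ} (z : TorusPt d L) (i : Fin d) : ℕ :=
  min (z i).val (L - (z i).val)

/-- The box `Q_z = {x : ∀ i, x_i ≤ ẑ_i or x_i > L - ẑ_i}` with corner `z`. -/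
def inBoxQ {d L : ℕ} (z x : TorusPt d L) : Prop :=
  ∀ i, (x i).val ≤ hatCoord z i ∨ L - hatCoord z i < (x i).val

section Abstract

variable {V S : Type*} [Fintype V] [MeasurableSpace S]

/-- Glue three configurations along the decomposition of the vertex set by the reflection. -/
noncomputable def glueCfg (T : V → V) (P : V → Prop) (w : (V → S) × (V → S) × (V → S)) : V → S :=
  open Classical in
  fun x => if P x then (if P (T x) then w.1 x else w.2.1 x) else w.2.2 (T x)

theorem glueCfg_measurePreserving (μ : Measure S) [IsProbabilityMeasure μ] (T : V → V)
    (P : V → Prop) (hT : ∀ x, T (T x) = x) (hcov : ∀ x, P x ∨ P (T x)) :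
    MeasurePreserving (glueCfg (S := S) T P)
      ((Measure.pi fun _ : V => μ).prod
        ((Measure.pi fun _ : V => μ).prod (Measure.pi fun _ : V => μ)))
      (Measure.pi fun _ : V => μ) := by
  classical
  have hmeas : Measurable (glueCfg (S := S) T P) := by
    rw [measurable_pi_iff]
    intro x
    unfold glueCfg
    by_cases h1 : P x
    · by_cases h2 : P (T x)
      · simp only [h1, h2, if_true]; fun_prop
      · simp only [h1, h2, if_true, if_false]; fun_prop
    · simp only [h1, if_false]; fun_prop
  refine ⟨hmeas, ?_⟩
  symm
  apply Measure.pi_eq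
  intro s hs
  rw [Measure.map_apply hmeas (MeasurableSet.univ_pi hs)]
  have hpre : glueCfg (S := S) T P ⁻¹' (Set.univ.pi s) =
      (Set.univ.pi fun x => if P x ∧ P (T x) then s x else Set.univ) ×ˢ
      ((Set.univ.pi fun x => if P x ∧ ¬ P (T x) then s x else Set.univ) ×ˢ
       (Set.univ.pi fun x => if P x ∧ ¬ P (T x) then s (T x) else Set.univ)) := by
    ext ⟨r, p, q⟩
    simp only [Set.mem_preimage, Set.mem_pi, Set.mem_univ, true_imp_iff, Set.mem_prod, glueCfg]
    constructor
    · intro h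
      refine ⟨fun x => ?_, fun x => ?_, fun x => ?_⟩
      · have := h x
        split_ifs with h1
        · simpa [h1.1, h1.2] using this
        · trivial
      · have := h x
        split_ifs with h1
        · simpa [h1.1, h1.2] using this
        · trivial
      · have := h (T x)
        split_ifs with h1
        · simpa [h1.1, h1.2, hT] using this
        · trivial
    · rintro ⟨h1, h2, h3⟩ x
      have a1 := h1 x
      have a2 := h2 x
      have a3 := h3 (T x)
      rw [hT] at a3
      have := hcov x
      by_cases c1 : P x <;> by_cases c2 : P (T x) <;> simp_all
  rw [hpre, Measure.prod_prod, Measure.prod_prod, Measure.pi_pi, Measure.pi_pi, Measure.pi_pi]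
  have hre : (∏ x, μ (if P x ∧ ¬ P (T x) then s (T x) else Set.univ)) =
      ∏ x, μ (if P (T x) ∧ ¬ P x then s x else Set.univ) := by
    refine Fintype.prod_equiv (Equiv.mk T T hT hT) _ _ (fun x => ?_)
    simp [hT]
  rw [hre, ← Finset.prod_mul_distrib, ← Finset.prod_mul_distrib]
  refine Finset.prod_congr rfl fun x _ => ?_
  have := hcov x
  by_cases c1 : P x <;> by_cases c2 : P (T x) <;> simp_all

theorem reflect_measurePreserving (μ : Measure S) [IsProbabilityMeasure μ] (T : V → V)
    (hT : ∀ x, T (T x) = x) :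
    MeasurePreserving (fun (φ : V → S) x => φ (T x))
      (Measure.pi fun _ : V => μ) (Measure.pi fun _ : V => μ) := by
  have hmeas : Measurable (fun (φ : V → S) x => φ (T x)) := by fun_prop
  refine ⟨hmeas, ?_⟩
  symm
  apply Measure.pi_eq
  intro s hs
  rw [Measure.map_apply hmeas (MeasurableSet.univ_pi hs)]
  have hpre : (fun (φ : V → S) x => φ (T x)) ⁻¹' (Set.univ.pi s) =
      Set.univ.pi fun x => s (T x) := by
    ext φ
    simp only [Set.mem_preimage, Set.mem_pi, Set.mem_univ, true_imp_iff]
    constructor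
    · intro h x
      have := h (T x)
      rwa [hT] at this
    · intro h x
      have := h (T x)
      rwa [hT] at this
  rw [hpre, Measure.pi_pi]
  exact Fintype.prod_equiv (Equiv.mk T T hT hT) _ _ (fun x => by simp)

/-- Reflection positivity of a product measure for a reflection through sites. -/
theorem reflection_positive_pi (μ : Measure S) [IsProbabilityMeasure μ] (T : V → V)
    (P : V → Prop) (hT : ∀ x, T (T x) = x) (hcov : ∀ x, P x ∨ P (T x))
    (hfix : ∀ x, P x → P (T x) → T x = x)
    (g : (V → S) → ℝ) (hg : Measurable g) (C : ℝ) (hC : ∀ φ, |g φ| ≤ C)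
    (hdep : ∀ φ ψ : V → S, (∀ x, P x → φ x = ψ x) → g φ = g ψ) :
    0 ≤ ∫ φ, g φ * g (fun x => φ (T x)) ∂(Measure.pi fun _ : V => μ) := by
  classical
  have hmp := glueCfg_measurePreserving μ T P hT hcov
  have hrefl : Measurable (fun (φ : V → S) x => φ (T x)) := by fun_prop
  have hGm : Measurable (fun φ : V → S => g φ * g (fun x => φ (T x))) :=
    hg.mul (hg.comp hrefl)
  rw [← hmp.map_eq, integral_map hmp.measurable.aemeasurable hGm.aestronglyMeasurable]
  have h1 : ∀ r p q : V → S, g (glueCfg T P (r, p, q)) = g (glueCfg T P (r, p, p)) := by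
    intro r p q
    apply hdep
    intro x hx
    simp [glueCfg, hx]
  have h2 : ∀ r p q : V → S, g (fun x => glueCfg T P (r, p, q) (T x)) =
      g (glueCfg T P (r, q, q)) := by
    intro r p q
    apply hdep
    intro x hx
    by_cases c : P (T x)
    · simp [glueCfg, hx, c, hT, hfix x hx c]
    · simp [glueCfg, hx, c, hT]
  rw [integral_prod]
  · refine integral_nonneg fun r => ?_
    have : (fun w : (V → S) × (V → S) => g (glueCfg T P (r, w)) *
        g (fun x => glueCfg T P (r, w) (T x))) =
        fun w => (fun p => g (glueCfg T P (r, p, p))) w.1 *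
          (fun p => g (glueCfg T P (r, p, p))) w.2 := by
      funext ⟨p, q⟩
      simp only
      rw [h1 r p q, h2 r p q]
    simp only [Pi.zero_apply]
    rw [this]
    have hm := integral_prod_mul (μ := Measure.pi fun _ : V => μ) (ν := Measure.pi fun _ : V => μ)
      (fun p : V → S => g (glueCfg T P (r, p, p))) (fun p : V → S => g (glueCfg T P (r, p, p)))
    exact (mul_self_nonneg _).trans_eq hm.symm
  · refine Integrable.of_bound (hGm.comp hmp.measurable).aestronglyMeasurable (C * C) ?_
    refine Filter.Eventually.of_forall fun w => ?_
    simp only [Function.comp, Real.norm_eq_abs, abs_mul]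
    exact mul_le_mul (hC _) (hC _) (abs_nonneg _) ((abs_nonneg _).trans (hC (glueCfg T P w)))

/-- The combinatorial part: the inequality follows from symmetry and positivity. -/
theorem reflection_sum_aux [DecidableEq V] (T : V → V)
    (P : V → Prop) [DecidablePred P] [DecidablePred fun x => P (T x)]
    (hT : ∀ x, T (T x) = x) (hcov : ∀ x, P x ∨ P (T x))
    (hfix : ∀ x, P x → P (T x) → T x = x)
    (K : V → V → ℝ) (hsym : ∀ x y, K x y = K y x) (hinv : ∀ x y, K (T x) (T y) = K x y)
    (hpos : ∀ a : V → ℝ, (∀ x, P (T x) → a x = 0) → 0 ≤ ∑ x, ∑ y, a x * a y * K x (T y))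
    (A : Finset V) :
    (∑ x ∈ A, ∑ y ∈ A, K x y) ≤ (1 / 2) *
      ((∑ x ∈ (A.filter P ∪ (A.filter P).image T), ∑ y ∈ (A.filter P ∪ (A.filter P).image T),
          K x y) +
       (∑ x ∈ (A.filter (fun x => P (T x)) ∪ (A.filter (fun x => P (T x))).image T),
        ∑ y ∈ (A.filter (fun x => P (T x)) ∪ (A.filter (fun x => P (T x))).image T), K x y)) := by
  let B : (V → ℝ) → (V → ℝ) → ℝ := fun a b => ∑ x, ∑ y, a x * b y * K x y
  let ind : Finset V → V → ℝ := fun D x => if x ∈ D then 1 else 0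
  have hB : ∀ D : Finset V, (∑ x ∈ D, ∑ y ∈ D, K x y) = B (ind D) (ind D) := by
    intro D
    simp only [B, ind, ite_mul, mul_ite, one_mul, zero_mul, mul_one, mul_zero]
    simp [Finset.sum_ite, Finset.sum_ite_mem]
  have hadd1 : ∀ a b c, B (a + b) c = B a c + B b c := by
    intro a b c
    simp only [B, Pi.add_apply, ← Finset.sum_add_distrib]
    exact Finset.sum_congr rfl fun x _ => Finset.sum_congr rfl fun y _ => by ring
  have hsymB : ∀ a b, B a b = B b a := by
    intro a b
    simp only [B]
    rw [Finset.sum_comm]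
    exact Finset.sum_congr rfl fun x _ => Finset.sum_congr rfl fun y _ => by
      rw [hsym]; ring
  have hadd2 : ∀ a b c, B c (a + b) = B c a + B c b := by
    intro a b c
    rw [hsymB, hadd1, hsymB a, hsymB b]
  have hneg1 : ∀ a c, B (-a) c = - B a c := by
    intro a c
    simp [B, Finset.sum_neg_distrib]
  have hneg2 : ∀ a c, B c (-a) = - B c a := by
    intro a c
    rw [hsymB, hneg1, hsymB]
  have hre : ∀ f : V → ℝ, ∑ x, f (T x) = ∑ x, f x := fun f =>
    Fintype.sum_equiv (Equiv.mk T T hT hT) _ _ (fun x => by simp)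
  have hBT : ∀ a b : V → ℝ, B (fun x => a (T x)) (fun x => b (T x)) = B a b := by
    intro a b
    simp only [B]
    rw [← hre]
    refine Finset.sum_congr rfl fun x _ => ?_
    rw [← hre]
    refine Finset.sum_congr rfl fun y _ => ?_
    rw [hT, hT, hinv]
  have hposB : ∀ a : V → ℝ, (∀ x, P (T x) → a x = 0) → 0 ≤ B a (fun x => a (T x)) := by
    intro a ha
    have := hpos a ha
    convert this using 1
    simp only [B]
    refine Finset.sum_congr rfl fun x _ => ?_
    rw [← hre]
    refine Finset.sum_congr rfl fun y _ => ?_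
    rw [hT]
  let p : V → ℝ := fun x => if x ∈ A ∧ ¬ P (T x) then 1 else 0
  let q : V → ℝ := fun x => if x ∈ A ∧ ¬ P x then 1 else 0
  let r : V → ℝ := fun x => if x ∈ A ∧ P x ∧ P (T x) then 1 else 0
  let p' : V → ℝ := fun x => p (T x)
  let q' : V → ℝ := fun x => q (T x)
  have e1 : ind A = p + r + q := by
    funext x
    have := hcov x
    simp only [ind, p, q, r, Pi.add_apply]
    by_cases c0 : x ∈ A <;> by_cases c1 : P x <;> by_cases c2 : P (T x) <;> simp_all
  have hmem : ∀ (D : Finset V) x, x ∈ D.image T ↔ T x ∈ D := by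
    intro D x
    rw [Finset.mem_image]
    constructor
    · rintro ⟨y, hy, rfl⟩
      rwa [hT]
    · intro h
      exact ⟨T x, h, hT x⟩
  have e2 : ind (A.filter P ∪ (A.filter P).image T) = p + r + p' := by
    funext x
    have h1 := hcov x
    have h2 := hfix x
    simp only [ind, p, p', r, Pi.add_apply, Finset.mem_union, hmem, Finset.mem_filter, hT]
    by_cases c1 : P x
    · by_cases c2 : P (T x)
      · simp [c1, c2, h2 c1 c2]
      · simp [c1, c2]
    · have c2 : P (T x) := h1.resolve_left c1
      simp [c1, c2]
  have e3 : ind (A.filter (fun x => P (T x)) ∪ (A.filter (fun x => P (T x))).image T)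
      = q + r + q' := by
    funext x
    have h1 := hcov x
    have h2 := hfix x
    simp only [ind, q, q', r, Pi.add_apply, Finset.mem_union, hmem, Finset.mem_filter, hT]
    by_cases c1 : P x
    · by_cases c2 : P (T x)
      · simp [c1, c2, h2 c1 c2]
      · simp [c1, c2]
    · have c2 : P (T x) := h1.resolve_left c1
      simp [c1, c2]
  have er : (fun x => r (T x)) = r := by
    funext x
    have h2 := hfix x
    simp only [r, hT]
    by_cases c1 : P x <;> by_cases c2 : P (T x) <;> simp_all
  have ep : (fun x => p' (T x)) = p := by
    funext x; simp only [p', hT]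
  have eq' : (fun x => q' (T x)) = q := by
    funext x; simp only [q', hT]
  have hp := hposB (p + -q') (by
    intro x hx
    simp [p, q', q, hx])
  have e4 : (fun x => (p + -q') (T x)) = p' + -q := by
    funext x
    simp only [Pi.add_apply, Pi.neg_apply, p', q', hT]
  rw [e4] at hp
  rw [hB, hB, hB, e1, e2, e3]
  simp only [hadd1, hadd2, hneg1, hneg2] at hp ⊢
  have s1 : B p' p' = B p p := hBT p p
  have s2 : B q' q' = B q q := hBT q q
  have s3 : B p' r = B p r := by
    have := hBT p r
    rwa [er] at this
  have s4 : B q' r = B q r := by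
    have := hBT q r
    rwa [er] at this
  have s5 : B q' p' = B q p := hBT q p
  have t1 := hsymB p r
  have t2 := hsymB q r
  have t3 := hsymB p q
  have t4 := hsymB p' r
  have t5 := hsymB q' r
  have t6 := hsymB p p'
  have t7 := hsymB q q'
  linarith

end Abstract

section Torus

variable {d L : ℕ} [NeZero L]

theorem reflSite_sub (i : Fin d) (m : ℕ) (x : TorusPt d L) :
    reflSite i m x i - (m : ZMod L) = -(x i - (m : ZMod L)) := by
  simp only [reflSite, Function.update_self]; ring

theorem reflSite_invol (i : Fin d) (m : ℕ) (x : TorusPt d L) :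
    reflSite i m (reflSite i m x) = x := by
  simp [reflSite]

theorem inMinus_iff (i : Fin d) (m : ℕ) (x : TorusPt d L) :
    inPlusSite i m (reflSite i m x) ↔ (-(x i - (m : ZMod L))).val ≤ L / 2 := by
  rw [inPlusSite, reflSite_sub]

theorem plus_cover (hL : Even L) (i : Fin d) (m : ℕ) (x : TorusPt d L) :
    inPlusSite i m x ∨ inPlusSite i m (reflSite i m x) := by
  rw [inMinus_iff, inPlusSite, ZMod.neg_val]
  obtain ⟨k, rfl⟩ := hL
  split_ifs <;> omega

theorem plus_fix (hL : Even L) (i : Fin d) (m : ℕ) (x : TorusPt d L)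
    (h1 : inPlusSite i m x) (h2 : inPlusSite i m (reflSite i m x)) : reflSite i m x = x := by
  rw [inMinus_iff] at h2
  rw [inPlusSite] at h1
  have key : -(x i - (m : ZMod L)) = x i - (m : ZMod L) := by
    apply ZMod.val_injective
    rw [ZMod.neg_val] at h2 ⊢
    obtain ⟨k, rfl⟩ := hL
    split_ifs at h2 ⊢ with h
    · simp [h]
    · omega
  funext k
  by_cases hk : k = i
  · subst hk
    simp only [reflSite, Function.update_self]
    linear_combination key
  · simp [reflSite, hk]

theorem half_step (hL : Even L) (a : ZMod L) :
    (a.val ≤ L / 2 ∧ (a + 1).val ≤ L / 2) ∨ ((-a).val ≤ L / 2 ∧ (-(a + 1)).val ≤ L / 2) := by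
  have hpos : 0 < L := Nat.pos_of_ne_zero (NeZero.ne L)
  have hlt := ZMod.val_lt a
  have h1 : (1 : ZMod L).val = 1 := by
    rw [ZMod.val_one_eq_one_mod]
    obtain ⟨k, rfl⟩ := hL
    exact Nat.mod_eq_of_lt (by omega)
  rw [ZMod.neg_val' a, ZMod.neg_val' (a + 1), ZMod.val_add, h1]
  obtain ⟨k, rfl⟩ := hL
  by_cases c : a.val + 1 < k + k
  · rw [Nat.mod_eq_of_lt c]
    rw [Nat.mod_eq_of_lt (a := k + k - (a.val + 1)) (by omega)]
    by_cases c0 : a.val = 0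
    · rw [c0]; left; omega
    · rw [Nat.mod_eq_of_lt (a := k + k - a.val) (by omega)]
      omega
  · have : a.val + 1 = k + k := by omega
    rw [this]
    have h0 : (k + k - a.val) = 1 := by omega
    rw [h0]
    simp only [Nat.mod_self, Nat.sub_zero]
    rw [Nat.mod_eq_of_lt (a := 1) (by omega)]
    omega

theorem adj_half (hL : Even L) (i : Fin d) (m : ℕ) (x y : TorusPt d L) (h : torusAdj x y) :
    (inPlusSite i m x ∧ inPlusSite i m y) ∨
      (inPlusSite i m (reflSite i m x) ∧ inPlusSite i m (reflSite i m y)) := by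
  rw [inMinus_iff, inMinus_iff, inPlusSite, inPlusSite]
  obtain ⟨j, hj⟩ := h
  by_cases hji : j = i
  · subst hji
    rcases hj with rfl | rfl
    · have := half_step hL (x j - (m : ZMod L))
      rw [Function.update_self]
      rwa [show x j + 1 - (m : ZMod L) = x j - m + 1 by ring]
    · have := half_step hL (x j - 1 - (m : ZMod L))
      rw [Function.update_self]
      rw [show x j - 1 - (m : ZMod L) + 1 = x j - m by ring] at this
      tauto
  · have hy : y i = x i := by
      rcases hj with rfl | rfl <;> simp [Ne.symm hji]
    rw [hy]
    have := plus_cover hL i m x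
    rw [inMinus_iff, inPlusSite] at this
    tauto

theorem adj_refl_of (i : Fin d) (m : ℕ) (x y : TorusPt d L) (h : torusAdj x y) :
    torusAdj (reflSite i m x) (reflSite i m y) := by
  obtain ⟨j, hj⟩ := h
  refine ⟨j, ?_⟩
  by_cases hji : j = i
  · subst hji
    rcases hj with rfl | rfl
    · right
      simp only [reflSite, Function.update_self, Function.update_idem]
      congr 1; ring
    · left
      simp only [reflSite, Function.update_self, Function.update_idem]
      congr 1; ring
  · rcases hj with rfl | rfl
    · left
      simp only [reflSite, Function.update_of_ne hji, Function.update_of_ne (Ne.symm hji)]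
      rw [Function.update_comm hji]
    · right
      simp only [reflSite, Function.update_of_ne hji, Function.update_of_ne (Ne.symm hji)]
      rw [Function.update_comm hji]

theorem adj_refl (i : Fin d) (m : ℕ) (x y : TorusPt d L) :
    torusAdj (reflSite i m x) (reflSite i m y) ↔ torusAdj x y := by
  refine ⟨fun h => ?_, adj_refl_of i m x y⟩
  have := adj_refl_of i m _ _ h
  rwa [reflSite_invol, reflSite_invol] at this

end Torus

section Spin

variable {d L N : ℕ} [NeZero L]

instance sphereUniform_prob_s4 [NeZero N] : IsProbabilityMeasure (sphereUniform N) := by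
  refine ⟨?_⟩
  have : Nontrivial (EuclideanSpace ℝ (Fin N)) := inferInstance
  simp only [sphereUniform, Measure.smul_apply, smul_eq_mul]
  refine ENNReal.inv_mul_cancel ?_ (measure_ne_top _ _)
  rw [Ne, Measure.measure_univ_eq_zero]
  exact Measure.toSphere_ne_zero _

theorem continuous_integrable [NeZero N] (f : SpinCfg d L N → ℝ) (hf : Continuous f) :
    Integrable f (spinMeasure d L N) := by
  have : IsProbabilityMeasure (spinMeasure d L N) := by
    unfold spinMeasure; infer_instance
  obtain ⟨C, hC⟩ := isCompact_univ.exists_bound_of_continuousOn hf.continuousOn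
  exact Integrable.of_bound hf.aestronglyMeasurable C
    (Filter.Eventually.of_forall fun x => hC x (Set.mem_univ x))

/-- Coupling of the plus half; edges inside the reflection plane get weight one half. -/
noncomputable def plusCoupling (i : Fin d) (m : ℕ) (x y : TorusPt d L) : ℝ :=
  if torusAdj x y ∧ inPlusSite i m x ∧ inPlusSite i m y then
    (if inPlusSite i m (reflSite i m x) ∧ inPlusSite i m (reflSite i m y) then 1 / 2 else 1)
  else 0

theorem plusCoupling_add (hL : Even L) (i : Fin d) (m : ℕ) (x y : TorusPt d L) :
    plusCoupling i m x y + plusCoupling i m (reflSite i m x) (reflSite i m y) =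
      if torusAdj x y then 1 else 0 := by
  unfold plusCoupling
  simp only [adj_refl, reflSite_invol]
  by_cases h : torusAdj x y
  · have := adj_half hL i m x y h
    simp only [h, true_and, if_true]
    by_cases c1 : inPlusSite i m x ∧ inPlusSite i m y <;>
      by_cases c2 : inPlusSite i m (reflSite i m x) ∧ inPlusSite i m (reflSite i m y) <;>
      simp only [c1, c2, if_true, if_false] <;> first | tauto | norm_num
  · simp [h]

/-- Energy of the plus half. -/
noncomputable def plusEnergy (i : Fin d) (m : ℕ) (φ : SpinCfg d L N) : ℝ :=
  (1 / 2) * ∑ x : TorusPt d L, ∑ y : TorusPt d L, plusCoupling i m x y *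
    ⟪(φ x : EuclideanSpace ℝ (Fin N)), (φ y : EuclideanSpace ℝ (Fin N))⟫

theorem sum_reflSite (i : Fin d) (m : ℕ) (f : TorusPt d L → ℝ) :
    ∑ x, f (reflSite i m x) = ∑ x, f x :=
  Fintype.sum_equiv (Equiv.mk (reflSite i m) (reflSite i m) (reflSite_invol i m) (reflSite_invol i m)) _ _
    (fun x => by simp)

theorem hamiltonian_split (hL : Even L) (i : Fin d) (m : ℕ) (φ : SpinCfg d L N) :
    - hamiltonian φ = plusEnergy i m φ + plusEnergy i m (fun x => φ (reflSite i m x)) := by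
  have h2 : plusEnergy i m (fun x => φ (reflSite i m x)) =
      (1 / 2) * ∑ x : TorusPt d L, ∑ y : TorusPt d L,
        plusCoupling i m (reflSite i m x) (reflSite i m y) *
        ⟪(φ x : EuclideanSpace ℝ (Fin N)), (φ y : EuclideanSpace ℝ (Fin N))⟫ := by
    unfold plusEnergy
    congr 1
    rw [← sum_reflSite i m]
    refine Finset.sum_congr rfl fun x _ => ?_
    rw [← sum_reflSite i m]
    refine Finset.sum_congr rfl fun y _ => ?_
    simp only [reflSite_invol]
  rw [h2, plusEnergy, hamiltonian, ← mul_add, ← Finset.sum_add_distrib, neg_mul, neg_neg]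
  congr 1
  refine Finset.sum_congr rfl fun x _ => ?_
  rw [← Finset.sum_add_distrib]
  refine Finset.sum_congr rfl fun y _ => ?_
  rw [← add_mul, plusCoupling_add hL]
  split_ifs <;> simp

theorem hamiltonian_refl (hL : Even L) (i : Fin d) (m : ℕ) (φ : SpinCfg d L N) :
    hamiltonian (fun x => φ (reflSite i m x)) = hamiltonian φ := by
  have h1 := hamiltonian_split hL i m φ
  have h2 := hamiltonian_split hL i m (fun x => φ (reflSite i m x))
  simp only [reflSite_invol] at h2
  linarith

theorem continuous_plusEnergy (i : Fin d) (m : ℕ) :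
    Continuous (plusEnergy (N := N) (L := L) i m) := by
  unfold plusEnergy
  fun_prop

theorem continuous_hamiltonian :
    Continuous (hamiltonian (N := N) (L := L) (d := d)) := by
  unfold hamiltonian
  refine continuous_const.mul (continuous_finsetSum _ fun x _ => continuous_finsetSum _ fun y _ => ?_)
  split_ifs
  · fun_prop
  · fun_prop

theorem plusEnergy_dep (i : Fin d) (m : ℕ) (φ ψ : SpinCfg d L N)
    (h : ∀ x, inPlusSite i m x → φ x = ψ x) : plusEnergy i m φ = plusEnergy i m ψ := by
  unfold plusEnergy
  congr 1
  refine Finset.sum_congr rfl fun x _ => Finset.sum_congr rfl fun y _ => ?_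
  by_cases c : inPlusSite i m x ∧ inPlusSite i m y
  · rw [h x c.1, h y c.2]
  · have : plusCoupling i m x y = 0 := by
      unfold plusCoupling
      rw [if_neg (by tauto)]
    simp [this]

theorem corrOne_symm [NeZero N] (β : ℝ) (x y : TorusPt d L) :
    corrOne d L N β x y = corrOne d L N β y x := by
  unfold corrOne
  congr 1
  funext φ
  ring

theorem corrOne_refl [NeZero N] (hL : Even L) (β : ℝ) (i : Fin d) (m : ℕ) (x y : TorusPt d L) :
    corrOne d L N β (reflSite i m x) (reflSite i m y) = corrOne d L N β x y := by
  unfold corrOne gibbsExp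
  congr 1
  have hmp := reflect_measurePreserving (sphereUniform N) (reflSite (L := L) i m)
    (reflSite_invol i m)
  have hc : Continuous fun φ : SpinCfg d L N =>
      (φ x : EuclideanSpace ℝ (Fin N)) 0 * (φ y : EuclideanSpace ℝ (Fin N)) 0 *
        Real.exp (-β * hamiltonian φ) := by
    have := continuous_hamiltonian (N := N) (L := L) (d := d)
    fun_prop
  have := integral_map (μ := spinMeasure d L N) hmp.measurable.aemeasurable
    (f := fun φ : SpinCfg d L N =>
      (φ x : EuclideanSpace ℝ (Fin N)) 0 * (φ y : EuclideanSpace ℝ (Fin N)) 0 *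
        Real.exp (-β * hamiltonian φ)) hc.aestronglyMeasurable
  rw [spinMeasure, hmp.map_eq] at this
  simp only [hamiltonian_refl hL] at this
  exact this.symm

theorem corrOne_pos [NeZero N] (hL : Even L) (β : ℝ) (i : Fin d) (m : ℕ)
    (a : TorusPt d L → ℝ) (ha : ∀ x, inPlusSite i m (reflSite i m x) → a x = 0) :
    0 ≤ ∑ x, ∑ y, a x * a y * corrOne d L N β x (reflSite i m y) := by
  have hE := continuous_plusEnergy (N := N) (L := L) i m
  have hH := continuous_hamiltonian (N := N) (L := L) (d := d)
  let g : SpinCfg d L N → ℝ := fun φ =>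
    (∑ x, a x * (φ x : EuclideanSpace ℝ (Fin N)) 0) * Real.exp (β * plusEnergy i m φ)
  have hgc : Continuous g := by
    simp only [g]
    fun_prop
  obtain ⟨C, hC⟩ := isCompact_univ.exists_bound_of_continuousOn hgc.continuousOn
  have key := reflection_positive_pi (sphereUniform N) (reflSite (L := L) i m) (inPlusSite i m)
    (reflSite_invol i m) (plus_cover hL i m) (plus_fix hL i m) g hgc.measurable C
    (fun φ => hC φ (Set.mem_univ _)) (by
      intro φ ψ h
      simp only [g]
      rw [plusEnergy_dep i m φ ψ h]
      congr 1
      refine Finset.sum_congr rfl fun x _ => ?_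
      rcases plus_cover hL i m x with c | c
      · rw [h x c]
      · rw [ha x c]; simp)
  have hint : ∀ x y, Integrable (fun φ : SpinCfg d L N => a x * a y *
      ((φ x : EuclideanSpace ℝ (Fin N)) 0 * (φ (reflSite i m y) : EuclideanSpace ℝ (Fin N)) 0 *
        Real.exp (-β * hamiltonian φ))) (spinMeasure d L N) := by
    intro x y
    apply continuous_integrable
    fun_prop
  have hsum : (∫ φ, g φ * g (fun x => φ (reflSite i m x)) ∂(spinMeasure d L N)) =
      ∑ x, ∑ y, a x * a y * ∫ φ, ((φ x : EuclideanSpace ℝ (Fin N)) 0 *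
        (φ (reflSite i m y) : EuclideanSpace ℝ (Fin N)) 0 *
        Real.exp (-β * hamiltonian φ)) ∂(spinMeasure d L N) := by
    simp only [← integral_const_mul]
    simp_rw [← integral_finsetSum Finset.univ (fun y _ => hint _ y)]
    rw [← integral_finsetSum Finset.univ
      (fun x _ => integrable_finsetSum Finset.univ (fun y _ => hint x y))]
    congr 1
    funext φ
    have hexp : Real.exp (-β * hamiltonian φ) = Real.exp (β * plusEnergy i m φ) *
        Real.exp (β * plusEnergy i m (fun x => φ (reflSite i m x))) := by
      rw [← Real.exp_add, ← mul_add, ← hamiltonian_split hL]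
      congr 1; ring
    simp only [g]
    rw [hexp, mul_mul_mul_comm, Finset.sum_mul_sum, Finset.sum_mul]
    refine Finset.sum_congr rfl fun x _ => ?_
    rw [Finset.sum_mul]
    refine Finset.sum_congr rfl fun y _ => ?_
    ring
  have hZ : 0 ≤ (∫ φ, Real.exp (-β * hamiltonian φ) ∂(spinMeasure d L N))⁻¹ :=
    inv_nonneg.mpr (integral_nonneg fun φ => (Real.exp_pos _).le)
  have := mul_nonneg hZ (hsum ▸ key)
  refine this.trans (le_of_eq ?_)
  rw [Finset.mul_sum]
  refine Finset.sum_congr rfl fun x _ => ?_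
  rw [Finset.mul_sum]
  refine Finset.sum_congr rfl fun y _ => ?_
  unfold corrOne gibbsExp
  ring

end Spin

/-- **Reflection-positivity inequality for sums of two-point functions (sites).**
For a reflection `Θ` through sites and `A ⊆ T_L`, with
`A^± = (A ∩ T_L^±) ∪ Θ(A ∩ T_L^±)`, the sum of `⟨φ_x^1 φ_y^1⟩` over ordered pairs of
distinct vertices of `A` is at most the half-sum of the corresponding sums over `A^+`
and over `A^-`. -/
theorem spin_site_reflection_sum_inequality
    (d L N : ℕ) [NeZero L] [NeZero N] (hd : 2 ≤ d) (hL : Even L)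
    (β : ℝ) (hβ : 0 ≤ β) (i : Fin d) (m : ℕ) (hm : m < L)
    (A : Finset (TorusPt d L)) :
    (∑ x ∈ A, ∑ y ∈ A, if x ≠ y then corrOne d L N β x y else 0) ≤
      (1 / 2) *
        ((∑ x ∈ (A.filter (inPlusSite i m) ∪ (A.filter (inPlusSite i m)).image (reflSite i m)),
            ∑ y ∈ (A.filter (inPlusSite i m) ∪ (A.filter (inPlusSite i m)).image (reflSite i m)),
              if x ≠ y then corrOne d L N β x y else 0) +
          (∑ x ∈ (A.filter (inMinusSite i m) ∪ (A.filter (inMinusSite i m)).image (reflSite i m)),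
            ∑ y ∈ (A.filter (inMinusSite i m) ∪ (A.filter (inMinusSite i m)).image (reflSite i m)),
              if x ≠ y then corrOne d L N β x y else 0)) := by
  refine reflection_sum_aux (reflSite i m) (inPlusSite i m) (reflSite_invol i m)
    (plus_cover hL i m) (plus_fix hL i m)
    (fun x y => if x ≠ y then corrOne d L N β x y else 0) ?_ ?_ ?_ A
  · intro x y
    simp only [ne_comm (a := x), corrOne_symm β x y]
  · intro x y
    have : reflSite i m x ≠ reflSite i m y ↔ x ≠ y :=
      (Function.Involutive.injective (reflSite_invol i m)).ne_iff
    simp only [this, corrOne_refl hL]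
  · intro a ha
    refine (corrOne_pos (N := N) hL β i m a ha).trans (le_of_eq ?_)
    refine Finset.sum_congr rfl fun x _ => Finset.sum_congr rfl fun y _ => ?_
    by_cases c : x = reflSite i m y
    · have hxy : a x * a y = 0 := by
        rcases plus_cover hL i m x with h | h
        · rw [c] at h
          rw [ha y h, mul_zero]
        · rw [ha x h, zero_mul]
      rw [hxy, zero_mul, zero_mul]
    · simp only [ne_eq, c, not_false_eq_true, if_true]
end
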